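/- arXiv:quant-ph/9706001 — 2 statements merged into one kernel-verified Lean document; each statement's English description precedes it below -/
import Mathlib

section
/- Let 𝔥 be a complex Hilbert space of dimension greater than two and let d be a bounded decoherence functional for 𝔥, with β the associated linear functional on K(𝔥) • K(𝔥). Then there exist families of trace class operators {𝔛ᵢ}_{i∈I} and {𝔜ᵢ}_{i∈I} on 𝔥 such that for each x and y in K(𝔥), the sums Σ_{i∈I} |tr(x𝔛ᵢ)|² and Σ_{i∈I} |tr(y𝔜ᵢ)|² are convergent, and for all S ∈ K(𝔥) • K(𝔥), β(S) = Σ_{i∈I} tr(S(𝔛ᵢ ⊗ 𝔛ᵢ* − 𝔜ᵢ ⊗ 𝔜ᵢ*)), where the series is absolutely convergent. -/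
/- Common background definitions: decoherence functionals on the projection
lattice of a complex Hilbert space, boundedness/additivity notions, trace class
operators, and an axiomatisation of the Hilbert space tensor product
`𝔥 ⊗ 𝔥` together with the operator tensor product. -/

noncomputable section

open scoped ComplexInnerProductSpace ComplexOrder
open ContinuousLinearMap

universe u

variable {E : Type u} [NormedAddCommGroup E] [InnerProductSpace ℂ E] [CompleteSpace E]
variable {G : Type u} [NormedAddCommGroup G] [InnerProductSpace ℂ G] [CompleteSpace G]

/-- `p` is an orthogonal projection on a Hilbert space. -/
def IsOrthoProj (p : E →L[ℂ] E) : Prop :=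
  IsIdempotentElem p ∧ IsSelfAdjoint p

/-- `p` is an operator of finite rank. -/
def HasFiniteRank (p : E →L[ℂ] E) : Prop :=
  FiniteDimensional ℂ ↥(LinearMap.range (p : E →ₗ[ℂ] E))

/-- A decoherence functional on the lattice of projections `P(𝔥)`
(modelled as a function on all pairs of bounded operators whose defining
properties refer only to its values at pairs of orthogonal projections). -/
structure IsDecoherenceFunctional (d : (E →L[ℂ] E) → (E →L[ℂ] E) → ℂ) : Prop where
  hermitian : ∀ p q, IsOrthoProj p → IsOrthoProj q → d p q = starRingEnd ℂ (d q p)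
  pos : ∀ p, IsOrthoProj p → 0 ≤ d p p
  normalized : d 1 1 = 1
  orthoadd : ∀ p₁ p₂ q, IsOrthoProj p₁ → IsOrthoProj p₂ → IsOrthoProj q →
    p₁ * p₂ = 0 → d (p₁ + p₂) q = d p₁ q + d p₂ q

/-- A decoherence functional is bounded if `{|d(p,q)|}` is a bounded set. -/
def DFBounded (d : (E →L[ℂ] E) → (E →L[ℂ] E) → ℂ) : Prop :=
  ∃ C : ℝ, ∀ p q, IsOrthoProj p → IsOrthoProj q → ‖d p q‖ ≤ C

/-- Countable additivity of a decoherence functional: for every countable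
pairwise orthogonal family of projections summing (strongly) to `P`,
`d (P, q) = ∑ d (pᵢ, q)`. -/
def DFCountablyAdditive (d : (E →L[ℂ] E) → (E →L[ℂ] E) → ℂ) : Prop :=
  ∀ (p : ℕ → E →L[ℂ] E) (P q : E →L[ℂ] E),
    (∀ i, IsOrthoProj (p i)) → IsOrthoProj P → IsOrthoProj q →
    (∀ i j, i ≠ j → p i * p j = 0) →
    (∀ x : E, HasSum (fun i => p i x) (P x)) →
    HasSum (fun i => d (p i) q) (d P q)

/-- Complete additivity of a decoherence functional. -/
def DFCompletelyAdditive (d : (E →L[ℂ] E) → (E →L[ℂ] E) → ℂ) : Prop :=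
  ∀ (ι : Type u) (p : ι → E →L[ℂ] E) (P q : E →L[ℂ] E),
    (∀ i, IsOrthoProj (p i)) → IsOrthoProj P → IsOrthoProj q →
    (∀ i j, i ≠ j → p i * p j = 0) →
    (∀ x : E, HasSum (fun i => p i x) (P x)) →
    HasSum (fun i => d (p i) q) (d P q)

/-- A bilinear form `D` on `B(𝔥) × B(𝔥)` is bounded. -/
def IsBoundedBilinear (D : (E →L[ℂ] E) →ₗ[ℂ] (E →L[ℂ] E) →ₗ[ℂ] ℂ) : Prop :=
  ∃ C : ℝ, ∀ x y : E →L[ℂ] E, ‖D x y‖ ≤ C * ‖x‖ * ‖y‖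

/-- The bilinear form `D` extends the decoherence functional `d`. -/
def ExtendsDF (D : (E →L[ℂ] E) →ₗ[ℂ] (E →L[ℂ] E) →ₗ[ℂ] ℂ)
    (d : (E →L[ℂ] E) → (E →L[ℂ] E) → ℂ) : Prop :=
  ∀ p q, IsOrthoProj p → IsOrthoProj q → D p q = d p q

/-- `T` is a trace class operator (via the standard characterisation: the sums
`∑ |⟪eᵢ, T fᵢ⟫|` over finite orthonormal families are uniformly bounded). -/
def IsTraceClass (T : E →L[ℂ] E) : Prop :=
  ∃ C : ℝ, ∀ (n : ℕ) (e f : Fin n → E), Orthonormal ℂ e → Orthonormal ℂ f →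
    ∑ i, ‖⟪e i, T (f i)⟫‖ ≤ C

/-- The trace of an operator computed in the Hilbert basis `b` (for a trace
class operator this is basis independent and is the usual trace). -/
def traceAlong {ι : Type*} (b : HilbertBasis ι ℂ E) (T : E →L[ℂ] E) : ℂ :=
  ∑' i, ⟪b i, T (b i)⟫

/-- The rank one orthogonal projection `p_ξ` onto the span of a unit vector `ξ`. -/
def rankOneProj (ξ : E) : E →L[ℂ] E :=
  (innerSL ℂ ξ).smulRight ξ

/-- An axiomatisation of the Hilbert space tensor product `G = E ⊗ E`:
a bilinear map `tmul` into `G` multiplying inner products and having dense span. -/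
structure HilbertTensorProduct (E G : Type u) [NormedAddCommGroup E]
    [InnerProductSpace ℂ E] [NormedAddCommGroup G] [InnerProductSpace ℂ G] :
    Type u where
  tmul : E →ₗ[ℂ] E →ₗ[ℂ] G
  inner_tmul : ∀ a b c d : E, ⟪tmul a b, tmul c d⟫ = ⟪a, c⟫ * ⟪b, d⟫
  dense_span : Dense (↑(Submodule.span ℂ (Set.range fun z : E × E => tmul z.1 z.2)) : Set G)

/-- The algebraic tensor product `E ⊗_alg E`, viewed as a (dense) subspace of `G`. -/
def HilbertTensorProduct.algSpan (J : HilbertTensorProduct E G) : Submodule ℂ G :=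
  Submodule.span ℂ (Set.range fun z : E × E => J.tmul z.1 z.2)

/-- The Hilbert space tensor product together with the operator tensor product
`(x, y) ↦ x ⊗ y` on bounded operators. -/
structure OperatorTensor (E G : Type u) [NormedAddCommGroup E]
    [InnerProductSpace ℂ E] [NormedAddCommGroup G] [InnerProductSpace ℂ G]
    extends HilbertTensorProduct E G where
  op : (E →L[ℂ] E) → (E →L[ℂ] E) → (G →L[ℂ] G)
  op_tmul : ∀ (x y : E →L[ℂ] E) (a b : E), op x y (tmul a b) = tmul (x a) (y b)

/-- The algebraic tensor product `K(𝔥) • K(𝔥)`: the span in `B(G)` of the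
operators `x ⊗ y` with `x, y` compact. -/
def OperatorTensor.compactSpan (J : OperatorTensor E G) : Submodule ℂ (G →L[ℂ] G) :=
  Submodule.span ℂ {T | ∃ x y : E →L[ℂ] E,
    IsCompactOperator (⇑x) ∧ IsCompactOperator (⇑y) ∧ T = J.op x y}

/-- `β` is the linear functional on `K(𝔥) • K(𝔥)` induced by the bilinear form
`D`, i.e. `β (x ⊗ y) = D (x, y)` for compact `x, y`. -/
def IsBetaFor (J : OperatorTensor E G)
    (D : (E →L[ℂ] E) →ₗ[ℂ] (E →L[ℂ] E) →ₗ[ℂ] ℂ)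
    (β : ↥J.compactSpan →ₗ[ℂ] ℂ) : Prop :=
  ∀ x y : E →L[ℂ] E, IsCompactOperator (⇑x) → IsCompactOperator (⇑y) →
    ∀ hm : J.op x y ∈ J.compactSpan, β ⟨J.op x y, hm⟩ = D x y

/-- `β` is bounded for the operator norm (inherited from `B(G)`). -/
def BetaNormBounded (J : OperatorTensor E G) (β : ↥J.compactSpan →ₗ[ℂ] ℂ) : Prop :=
  ∃ C : ℝ, ∀ S : J.compactSpan, ‖β S‖ ≤ C * ‖(S : G →L[ℂ] G)‖

/-- A decoherence functional is tensor bounded if its associated functional `β`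
on `K(𝔥) • K(𝔥)` is bounded for the (pre-)C*-norm. -/
def IsTensorBounded (J : OperatorTensor E G)
    (d : (E →L[ℂ] E) → (E →L[ℂ] E) → ℂ) : Prop :=
  ∃ D, IsBoundedBilinear D ∧ ExtendsDF D d ∧
    ∃ β, IsBetaFor J D β ∧ BetaNormBounded J β

/-- `β` is uniformly bounded on the projections `p_ξ`, `ξ` a unit vector of the
algebraic tensor product `𝔥 ⊗_alg 𝔥`. -/
def BetaTraciallyBounded (J : OperatorTensor E G) (β : ↥J.compactSpan →ₗ[ℂ] ℂ) : Prop :=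
  ∃ C : ℝ, ∀ ξ : G, ξ ∈ J.toHilbertTensorProduct.algSpan → ‖ξ‖ = 1 →
    ∀ hm : rankOneProj ξ ∈ J.compactSpan, ‖β ⟨rankOneProj ξ, hm⟩‖ ≤ C

/-- A decoherence functional is tracially bounded if it is bounded and its
associated functional `β` is uniformly bounded on rank one projections `p_ξ`
with `ξ` a unit vector in `𝔥 ⊗_alg 𝔥`. -/
def IsTraciallyBounded (J : OperatorTensor E G)
    (d : (E →L[ℂ] E) → (E →L[ℂ] E) → ℂ) : Prop :=
  DFBounded d ∧ ∃ D, IsBoundedBilinear D ∧ ExtendsDF D d ∧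
    ∃ β, IsBetaFor J D β ∧ BetaTraciallyBounded J β


/-! ### Truncation of operators via resolvents -/

section Trunc
variable {F : Type*} [NormedAddCommGroup F] [InnerProductSpace ℂ F] [CompleteSpace F]

lemma trunc_aux (X : F →L[ℂ] F) (ζ : F) :
    ‖X ζ‖ ≤ 2 * ‖ζ + (1/16 : ℂ) • adjoint X (X ζ)‖ ∧
    ‖ζ‖ ≤ ‖ζ + (1/16 : ℂ) • adjoint X (X ζ)‖ := by
  have h1 : ‖ζ + (1/16 : ℂ) • adjoint X (X ζ)‖ ^ 2 =
      ‖ζ‖ ^ 2 + (1/8) * ‖X ζ‖ ^ 2 + (1/256) * ‖adjoint X (X ζ)‖ ^ 2 := by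
    rw [@norm_add_sq ℂ, inner_smul_right, adjoint_inner_right, inner_self_eq_norm_sq_to_K,
      norm_smul]
    have : (RCLike.re ((1/16 : ℂ) * ((‖X ζ‖ : ℝ) : ℂ) ^ 2) : ℝ) = (1/16) * ‖X ζ‖ ^ 2 := by
      have : ((1/16 : ℂ) * ((‖X ζ‖ : ℝ) : ℂ) ^ 2) = (((1/16) * ‖X ζ‖ ^ 2 : ℝ) : ℂ) := by
        push_cast; ring
      rw [this]; exact Complex.ofReal_re _
    erw [this]
    norm_num
    ring
  have h2 : ‖X ζ‖ ^ 2 ≤ ‖ζ‖ * ‖adjoint X (X ζ)‖ := by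
    have : ‖(⟪ζ, adjoint X (X ζ)⟫ : ℂ)‖ = ‖X ζ‖ ^ 2 := by
      rw [adjoint_inner_right, inner_self_eq_norm_sq_to_K]; simp
    rw [← this]; exact norm_inner_le_norm _ _
  constructor
  · refine abs_le_of_sq_le_sq' ?_ (by positivity) |>.2
    rw [mul_pow, h1]
    nlinarith [sq_nonneg (2 * ‖ζ‖ - (1/8) * ‖adjoint X (X ζ)‖)]
  · refine abs_le_of_sq_le_sq' ?_ (by positivity) |>.2
    rw [h1]
    nlinarith [sq_nonneg ‖X ζ‖, sq_nonneg ‖adjoint X (X ζ)‖]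

lemma trunc_inv (X : F →L[ℂ] F) : IsUnit (1 + (1/16 : ℂ) • (star X * X)) := by
  have h : (1/16 : ℂ) • (star X * X) = star ((1/4 : ℂ) • X) * ((1/4 : ℂ) • X) := by
    rw [star_smul, smul_mul_smul_comm]
    congr 1
    norm_num
  rw [h]
  have := (isStrictlyPositive_one (A := F →L[ℂ] F)).add_nonneg (star_mul_self_nonneg ((1/4 : ℂ) • X))
  exact this.isUnit

lemma trunc (X : F →L[ℂ] F) : ∃ T : F →L[ℂ] F, ‖T‖ ≤ 2 ∧ (∀ ξ, ‖T ξ‖ ≤ ‖X ξ‖) ∧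
    (∀ ξ, ‖star T ξ‖ ≤ ‖star X ξ‖) ∧
    (∀ ξ, ‖(X - T) ξ‖ ^ 2 ≤ (1/64) * ‖star X (X ξ)‖ ^ 2) ∧
    (∀ ξ, ‖star (X - T) ξ‖ ^ 2 ≤ (1/64) * ‖X (star X ξ)‖ ^ 2) := by
  -- left and right resolvents
  obtain ⟨r, hr⟩ := trunc_inv X
  obtain ⟨q, hq⟩ := trunc_inv (star X)
  rw [star_star] at hq
  set R : F →L[ℂ] F := ↑r⁻¹ with hR
  set Q : F →L[ℂ] F := ↑q⁻¹ with hQ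
  have r1 : (1 + (1/16 : ℂ) • (star X * X)) * R = 1 := by rw [← hr]; exact r.mul_inv
  have r2 : R * (1 + (1/16 : ℂ) • (star X * X)) = 1 := by rw [← hr]; exact r.inv_mul
  have q1 : (1 + (1/16 : ℂ) • (X * star X)) * Q = 1 := by rw [← hq]; exact q.mul_inv
  have q2 : Q * (1 + (1/16 : ℂ) • (X * star X)) = 1 := by rw [← hq]; exact q.inv_mul
  have hc : (1 + (1/16 : ℂ) • (X * star X)) * X = X * (1 + (1/16 : ℂ) • (star X * X)) := by
    simp [add_mul, mul_add, mul_assoc]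
  have hXR : X * R = Q * X := by
    calc X * R = Q * ((1 + (1/16 : ℂ) • (X * star X)) * X) * R := by
          rw [← mul_assoc Q, q2, one_mul]
      _ = Q * X := by rw [hc, mul_assoc, mul_assoc, r1, mul_one]
  have hRs : star R = R := by
    have h : star R * (1 + (1/16 : ℂ) • (star X * X)) = 1 := by
      have := congrArg star r1
      simpa using this
    calc star R = star R * ((1 + (1/16 : ℂ) • (star X * X)) * R) := by rw [r1, mul_one]
      _ = R := by rw [← mul_assoc, h, one_mul]
  have hQs : star Q = Q := by
    have h : star Q * (1 + (1/16 : ℂ) • (X * star X)) = 1 := by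
      have := congrArg star q1
      simpa using this
    calc star Q = star Q * ((1 + (1/16 : ℂ) • (X * star X)) * Q) := by rw [q1, mul_one]
      _ = Q := by rw [← mul_assoc, h, one_mul]
  have r1v : ∀ ξ, R ξ + (1/16 : ℂ) • adjoint X (X (R ξ)) = ξ := fun ξ => by
    have := congrArg (fun A : F →L[ℂ] F => A ξ) r1
    simpa [star_eq_adjoint] using this
  have r2v : ∀ ξ, ξ - R ξ = R ((1/16 : ℂ) • adjoint X (X ξ)) := fun ξ => by
    have := congrArg (fun A : F →L[ℂ] F => A ξ) r2
    have h2 : R ξ + R ((1/16 : ℂ) • adjoint X (X ξ)) = ξ := by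
      simpa [star_eq_adjoint, mul_add] using this
    rw [sub_eq_iff_eq_add']; exact h2.symm
  have q1v : ∀ ξ, Q ξ + (1/16 : ℂ) • X (adjoint X (Q ξ)) = ξ := fun ξ => by
    have := congrArg (fun A : F →L[ℂ] F => A ξ) q1
    simpa [star_eq_adjoint] using this
  have q2v : ∀ ξ, ξ - Q ξ = Q ((1/16 : ℂ) • X (adjoint X ξ)) := fun ξ => by
    have := congrArg (fun A : F →L[ℂ] F => A ξ) q2
    have h2 : Q ξ + Q ((1/16 : ℂ) • X (adjoint X ξ)) = ξ := by
      simpa [star_eq_adjoint, mul_add] using this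
    rw [sub_eq_iff_eq_add']; exact h2.symm
  have hR1 : ∀ ξ, ‖X (R ξ)‖ ≤ 2 * ‖ξ‖ ∧ ‖R ξ‖ ≤ ‖ξ‖ := fun ξ => by
    have := trunc_aux X (R ξ); rwa [r1v] at this
  have hQ1 : ∀ ξ, ‖adjoint X (Q ξ)‖ ≤ 2 * ‖ξ‖ ∧ ‖Q ξ‖ ≤ ‖ξ‖ := fun ξ => by
    have := trunc_aux (adjoint X) (Q ξ); rw [adjoint_adjoint, q1v] at this; exact this
  have hst : star (X * R) = star X * Q := by rw [hXR, star_mul, hQs]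
  have hst' : star (X * R) = R * star X := by rw [star_mul, hRs]
  refine ⟨X * R, ?_, ?_, ?_, ?_, ?_⟩
  · exact opNorm_le_bound _ (by norm_num) fun ξ => (hR1 ξ).1
  · intro ξ; rw [hXR]; exact (hQ1 (X ξ)).2
  · intro ξ; rw [hst']; exact (hR1 _).2
  · intro ξ
    have : (X - X * R) ξ = X (R ((1/16 : ℂ) • adjoint X (X ξ))) := by
      rw [← r2v]; simp
    rw [this, star_eq_adjoint]
    have h := (hR1 ((1/16 : ℂ) • adjoint X (X ξ))).1
    have h16 : ‖(1/16 : ℂ) • (adjoint X (X ξ))‖ = (1/16) * ‖adjoint X (X ξ)‖ := by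
      rw [norm_smul]; norm_num
    rw [h16] at h
    nlinarith [norm_nonneg (X (R ((1/16 : ℂ) • adjoint X (X ξ)))), norm_nonneg (adjoint X (X ξ))]
  · intro ξ
    have : star (X - X * R) ξ = adjoint X (Q ((1/16 : ℂ) • X (adjoint X ξ))) := by
      rw [← q2v, star_sub, hst]; simp [star_eq_adjoint]
    rw [this, star_eq_adjoint]
    have h := (hQ1 ((1/16 : ℂ) • X (adjoint X ξ))).1
    have h16 : ‖(1/16 : ℂ) • (X (adjoint X ξ))‖ = (1/16) * ‖X (adjoint X ξ)‖ := by
      rw [norm_smul]; norm_num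
    rw [h16] at h
    nlinarith [norm_nonneg (adjoint X (Q ((1/16 : ℂ) • X (adjoint X ξ)))), norm_nonneg (X (adjoint X ξ))]
end Trunc

/-! ### Random phases -/

section Phases
set_option linter.unusedSectionVars false
variable {ι : Type} [Fintype ι] [DecidableEq ι]

/-- The character of `(ℤ/3)^ι` attached to the weight `w`. -/
def phase (w : ι → ZMod 3) (ω : ι → ZMod 3) : ℂ := ZMod.stdAddChar (∑ i, w i * ω i)

lemma phase_sub (w w' ω : ι → ZMod 3) :
    starRingEnd ℂ (phase w ω) * phase w' ω = phase (w' - w) ω := by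
  unfold phase
  rw [← AddChar.map_neg_eq_conj, ← AddChar.map_add_eq_mul, ← Finset.sum_neg_distrib,
    ← Finset.sum_add_distrib]
  congr 1
  refine Finset.sum_congr rfl fun i _ => ?_
  simp only [Pi.sub_apply]; ring

lemma phase_sum (w : ι → ZMod 3) :
    ∑ ω, phase w ω = if w = 0 then (Fintype.card (ι → ZMod 3) : ℂ) else 0 := by
  split_ifs with h
  · subst h; simp [phase]
  · let χ : AddChar (ι → ZMod 3) ℂ :=
      { toFun := phase w
        map_zero_eq_one' := by simp [phase]
        map_add_eq_mul' := fun a b => by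
          simp [phase, mul_add, Finset.sum_add_distrib, AddChar.map_add_eq_mul] }
    obtain ⟨i, hi⟩ := Function.ne_iff.mp h
    have hχ : χ ≠ 1 := by
      intro h1
      have h2 : phase w (Pi.single i 1) = 1 := by
        have := congrArg (fun c : AddChar (ι → ZMod 3) ℂ => c (Pi.single i 1)) h1
        exact this
      apply hi
      have h3 : ZMod.stdAddChar (N := 3) (w i) = ZMod.stdAddChar (N := 3) 0 := by
        rw [AddChar.map_zero_eq_one, ← h2]
        simp [phase, Pi.single_apply]
      exact ZMod.injective_stdAddChar h3
    have := AddChar.sum_eq_zero_iff_ne_zero.mpr hχ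
    exact this

lemma phase_orth {α : Type*} [Fintype α] {F : Type*} [NormedAddCommGroup F]
    [InnerProductSpace ℂ F] (w : α → ι → ZMod 3) (hw : Function.Injective w) (v : α → F) :
    ∑ ω, ‖∑ a, phase (w a) ω • v a‖ ^ 2 = (Fintype.card (ι → ZMod 3) : ℝ) * ∑ a, ‖v a‖ ^ 2 := by
  classical
  have key : ∑ ω, (⟪∑ a, phase (w a) ω • v a, ∑ a, phase (w a) ω • v a⟫ : ℂ) =
      (Fintype.card (ι → ZMod 3) : ℂ) * ∑ a, (⟪v a, v a⟫ : ℂ) := by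
    simp_rw [sum_inner, inner_sum, inner_smul_left, inner_smul_right]
    rw [Finset.sum_comm, Finset.mul_sum]
    refine Finset.sum_congr rfl fun a _ => ?_
    rw [Finset.sum_comm]
    simp_rw [← mul_assoc, phase_sub, ← Finset.sum_mul, phase_sum, sub_eq_zero, hw.eq_iff]
    simp
  simp_rw [inner_self_eq_norm_sq_to_K] at key
  have key2 := congrArg Complex.re key
  simp only [Complex.coe_algebraMap] at key2
  exact_mod_cast key2

lemma phase_orth_bilin {α : Type*} [Fintype α] {F F' : Type*} [AddCommGroup F] [Module ℂ F]
    [AddCommGroup F'] [Module ℂ F']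
    (w : α → ι → ZMod 3) (hw : Function.Injective w) (φ : F →ₗ[ℂ] F' →ₗ[ℂ] ℂ) (x : α → F)
    (y : α → F') :
    ∑ ω, φ (∑ a, phase (w a) ω • x a) (∑ a, starRingEnd ℂ (phase (w a) ω) • y a) =
      (Fintype.card (ι → ZMod 3) : ℂ) * ∑ a, φ (x a) (y a) := by
  classical
  simp_rw [map_sum, LinearMap.sum_apply, map_smul, LinearMap.smul_apply, smul_eq_mul]
  rw [Finset.sum_comm, Finset.mul_sum]
  refine Finset.sum_congr rfl fun a _ => ?_
  rw [Finset.sum_comm]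
  simp_rw [← mul_assoc, phase_sub, ← Finset.sum_mul, phase_sum, sub_eq_zero, hw.eq_iff]
  simp [eq_comm]

/-- The weights used for fourth moments. -/
def wt4 : Option {p : ι × ι // p.1 ≠ p.2} → ι → ZMod 3
  | none => 0
  | some p => Pi.single p.1.2 1 - Pi.single p.1.1 1

lemma wt4_inj : Function.Injective (wt4 (ι := ι)) := by
  have h1 : ∀ p : {p : ι × ι // p.1 ≠ p.2}, ∀ i, wt4 (some p) i = 1 ↔ i = p.1.2 := by
    rintro ⟨⟨j, k⟩, h⟩ i
    simp only [wt4, Pi.sub_apply, Pi.single_apply]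
    simp only at h
    constructor
    · intro hh
      by_contra hne
      rw [if_neg hne] at hh
      split_ifs at hh <;> revert hh <;> decide
    · rintro rfl
      rw [if_pos rfl, if_neg (fun e => h e.symm)]; decide
  have h2 : ∀ p : {p : ι × ι // p.1 ≠ p.2}, ∀ i, wt4 (some p) i = -1 ↔ i = p.1.1 := by
    rintro ⟨⟨j, k⟩, h⟩ i
    simp only [wt4, Pi.sub_apply, Pi.single_apply]
    simp only at h
    constructor
    · intro hh
      by_contra hne
      rw [if_neg hne] at hh
      split_ifs at hh <;> revert hh <;> decide
    · rintro rfl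
      rw [if_pos rfl, if_neg h]; decide
  intro a b hab
  cases a with
  | none =>
    cases b with
    | none => rfl
    | some q =>
      have := (h1 q q.1.2).2 rfl
      rw [← hab] at this
      simp [wt4] at this
  | some p =>
    cases b with
    | none =>
      have := (h1 p p.1.2).2 rfl
      rw [hab] at this
      simp [wt4] at this
    | some q =>
      congr 1
      apply Subtype.ext
      apply Prod.ext
      · exact (h2 q _).1 (by rw [← hab]; exact (h2 p _).2 rfl)
      · exact (h1 q _).1 (by rw [← hab]; exact (h1 p _).2 rfl)

lemma single_wt_inj : Function.Injective (fun j : ι => (Pi.single j 1 : ι → ZMod 3)) := by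
  intro a b h
  by_contra hne
  have := congrFun h a
  simp [hne] at this

lemma phase_fourth {F : Type*} [NormedAddCommGroup F] [InnerProductSpace ℂ F] (v : ι → ι → F) :
    ∑ ω, ‖∑ j, ∑ k, (starRingEnd ℂ (phase (Pi.single j 1) ω) * phase (Pi.single k 1) ω) • v j k‖ ^ 2
      ≤ (Fintype.card (ι → ZMod 3) : ℝ) * (‖∑ j, v j j‖ ^ 2 + ∑ j, ∑ k, ‖v j k‖ ^ 2) := by
  set u : Option {p : ι × ι // p.1 ≠ p.2} → F := fun o =>
    match o with
    | none => ∑ j, v j j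
    | some p => v p.1.1 p.1.2 with hu
  have h1 : ∀ ω : ι → ZMod 3,
      ∑ j, ∑ k, (starRingEnd ℂ (phase (Pi.single j 1) ω) * phase (Pi.single k 1) ω) • v j k =
      ∑ o, phase (wt4 o) ω • u o := by
    intro ω
    simp_rw [phase_sub]
    rw [Fintype.sum_option, ← Fintype.sum_prod_type',
      ← Fintype.sum_subtype_add_sum_subtype (fun p : ι × ι => p.1 ≠ p.2), add_comm]
    congr 1
    · have : phase (wt4 (none : Option {p : ι × ι // p.1 ≠ p.2})) ω = 1 := by simp [phase, wt4]
      rw [this, one_smul]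
      refine Fintype.sum_equiv
        ⟨fun p => p.1.1, fun j => ⟨(j, j), by simp⟩, fun p => ?_, fun j => rfl⟩ _ _ ?_
      · obtain ⟨⟨a, b⟩, h⟩ := p
        simp only [ne_eq, not_not] at h
        subst h; rfl
      · rintro ⟨⟨a, b⟩, h⟩
        simp only [ne_eq, not_not] at h
        subst h
        simp [phase]
  simp_rw [h1]
  rw [phase_orth _ wt4_inj, Fintype.sum_option]
  refine mul_le_mul_of_nonneg_left ?_ (by positivity)
  refine add_le_add le_rfl ?_
  rw [← Fintype.sum_prod_type', ← Fintype.sum_subtype_add_sum_subtype (fun p : ι × ι => p.1 ≠ p.2)]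
  refine le_add_of_nonneg_right (Finset.sum_nonneg fun _ _ => by positivity)
end Phases

/-! ### A noncommutative Grothendieck inequality -/

section Groth
variable {F : Type*} [NormedAddCommGroup F] [InnerProductSpace ℂ F] [CompleteSpace F]

/-- Row and column bounds for a finite family of operators. -/
def RCBound {ι : Type*} [Fintype ι] (x : ι → F →L[ℂ] F) (c : ℝ) : Prop :=
  (∀ ξ, ∑ j, ‖x j ξ‖ ^ 2 ≤ c * ‖ξ‖ ^ 2) ∧ (∀ ξ, ∑ j, ‖star (x j) ξ‖ ^ 2 ≤ c * ‖ξ‖ ^ 2)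

/-- The Grothendieck inequality for the form `φ` with constant `K`. -/
def GTBound (φ : (F →L[ℂ] F) →ₗ[ℂ] (F →L[ℂ] F) →ₗ[ℂ] ℂ) (K : ℝ) : Prop :=
  ∀ (ι : Type) [Fintype ι] (x y : ι → F →L[ℂ] F), RCBound x 1 → RCBound y 1 →
    ‖∑ j, φ (x j) (y j)‖ ≤ K

lemma RCBound.star {ι : Type*} [Fintype ι] {x : ι → F →L[ℂ] F} {c : ℝ} (h : RCBound x c) :
    RCBound (fun j => star (x j)) c := by
  refine ⟨h.2, fun ξ => ?_⟩
  simpa using h.1 ξ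

lemma RCBound.smul {ι : Type*} [Fintype ι] {x : ι → F →L[ℂ] F} {c : ℝ} (h : RCBound x c) (t : ℝ) :
    RCBound (fun j => (t : ℂ) • x j) (t ^ 2 * c) := by
  constructor
  · intro ξ
    have : ∑ j, ‖((t : ℂ) • x j) ξ‖ ^ 2 = t ^ 2 * ∑ j, ‖x j ξ‖ ^ 2 := by
      rw [Finset.mul_sum]
      refine Finset.sum_congr rfl fun j _ => ?_
      rw [smul_apply, norm_smul, mul_pow]; simp
    rw [this, mul_assoc]
    exact mul_le_mul_of_nonneg_left (h.1 ξ) (sq_nonneg t)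
  · intro ξ
    have : ∑ j, ‖Star.star ((t : ℂ) • x j) ξ‖ ^ 2 = t ^ 2 * ∑ j, ‖Star.star (x j) ξ‖ ^ 2 := by
      rw [Finset.mul_sum]
      refine Finset.sum_congr rfl fun j _ => ?_
      rw [star_smul, smul_apply, norm_smul, mul_pow]; simp
    rw [this, mul_assoc]
    exact mul_le_mul_of_nonneg_left (h.2 ξ) (sq_nonneg t)

lemma GTBound.scaled {φ : (F →L[ℂ] F) →ₗ[ℂ] (F →L[ℂ] F) →ₗ[ℂ] ℂ} {K : ℝ} (h : GTBound φ K)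
    {ι : Type} [Fintype ι] {x y : ι → F →L[ℂ] F} {a b : ℝ} (ha : 0 < a) (hb : 0 < b)
    (hx : RCBound x (a ^ 2)) (hy : RCBound y (b ^ 2)) :
    ‖∑ j, φ (x j) (y j)‖ ≤ K * a * b := by
  have h1 := hx.smul a⁻¹
  have h2 := hy.smul b⁻¹
  rw [show a⁻¹ ^ 2 * a ^ 2 = 1 by field_simp] at h1
  rw [show b⁻¹ ^ 2 * b ^ 2 = 1 by field_simp] at h2
  have h3 := h ι _ _ h1 h2
  have h4 : ∑ j, φ (((a⁻¹ : ℝ) : ℂ) • x j) (((b⁻¹ : ℝ) : ℂ) • y j) =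
      ((a⁻¹ * b⁻¹ : ℝ) : ℂ) * ∑ j, φ (x j) (y j) := by
    rw [Finset.mul_sum]
    refine Finset.sum_congr rfl fun j _ => ?_
    simp only [map_smul, LinearMap.smul_apply, smul_eq_mul]; push_cast; ring
  rw [h4, norm_mul, Complex.norm_real, Real.norm_of_nonneg (by positivity)] at h3
  calc ‖∑ j, φ (x j) (y j)‖ = (a⁻¹ * b⁻¹ * ‖∑ j, φ (x j) (y j)‖) * (a * b) := by field_simp
    _ ≤ K * (a * b) := mul_le_mul_of_nonneg_right h3 (by positivity)
    _ = K * a * b := by ring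

lemma phase_conj {ι : Type} [Fintype ι] (w ω : ι → ZMod 3) :
    starRingEnd ℂ (phase w ω) = phase (-w) ω := by
  classical
  have := phase_sub w 0 ω
  simpa [phase] using this

/-- `‖∑ x_j* x_j ξ‖ ≤ ‖ξ‖`. -/
lemma RCBound.sum_star_mul {ι : Type*} [Fintype ι] {x : ι → F →L[ℂ] F} (h : RCBound x 1) (ξ : F) :
    ‖∑ j, Star.star (x j) (x j ξ)‖ ≤ ‖ξ‖ := by
  set η := ∑ j, Star.star (x j) (x j ξ) with hη
  have h1 : (⟪η, η⟫ : ℂ) = ∑ j, ⟪x j η, x j ξ⟫ := by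
    nth_rewrite 2 [hη]
    rw [inner_sum]
    simp_rw [star_eq_adjoint, adjoint_inner_right]
  have h2 : ‖η‖ ^ 2 ≤ ∑ j, ‖x j η‖ * ‖x j ξ‖ := by
    have : ‖(⟪η, η⟫ : ℂ)‖ = ‖η‖ ^ 2 := by rw [inner_self_eq_norm_sq_to_K]; simp
    rw [← this, h1]
    exact (norm_sum_le _ _).trans (Finset.sum_le_sum fun j _ => norm_inner_le_norm _ _)
  have h3 := Finset.sum_mul_sq_le_sq_mul_sq Finset.univ (fun j => ‖x j η‖) (fun j => ‖x j ξ‖)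
  have h4 := h.1 η
  have h5 := h.1 ξ
  rw [one_mul] at h4 h5
  have h6 : (‖η‖ ^ 2) ^ 2 ≤ (‖η‖ * ‖ξ‖) ^ 2 := by
    calc (‖η‖ ^ 2) ^ 2 ≤ (∑ j, ‖x j η‖ * ‖x j ξ‖) ^ 2 := by gcongr
      _ ≤ _ := h3
      _ ≤ ‖η‖ ^ 2 * ‖ξ‖ ^ 2 := by gcongr
      _ = _ := by ring
  have h7 : ‖η‖ ^ 2 ≤ ‖η‖ * ‖ξ‖ := abs_le_of_sq_le_sq' h6 (by positivity) |>.2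
  by_contra hlt
  push Not at hlt
  nlinarith [norm_nonneg ξ]

/-- The randomised sum of a family. -/
def rsum {ι : Type} [Fintype ι] [DecidableEq ι] (x : ι → F →L[ℂ] F) (ω : ι → ZMod 3) : F →L[ℂ] F :=
  ∑ j, phase (Pi.single j 1) ω • x j

lemma star_rsum {ι : Type} [Fintype ι] [DecidableEq ι] (x : ι → F →L[ℂ] F) (ω : ι → ZMod 3) :
    star (rsum x ω) = ∑ j, starRingEnd ℂ (phase (Pi.single j 1) ω) • star (x j) := by
  simp [rsum, star_sum, star_smul]

lemma rsum_rc {ι : Type} [Fintype ι] [DecidableEq ι] {x : ι → F →L[ℂ] F} (h : RCBound x 1) :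
    RCBound (rsum x) (Fintype.card (ι → ZMod 3)) := by
  constructor
  · intro ξ
    have : ∀ ω, rsum x ω ξ = ∑ j, phase (Pi.single j 1) ω • x j ξ := fun ω => by
      simp [rsum, sum_apply]
    simp_rw [this]
    rw [phase_orth _ single_wt_inj]
    have := h.1 ξ
    gcongr
    linarith
  · intro ξ
    have : ∀ ω, star (rsum x ω) ξ = ∑ j, phase (-Pi.single j 1) ω • star (x j) ξ := fun ω => by
      rw [star_rsum]; simp [phase_conj, sum_apply]
    simp_rw [this]
    rw [phase_orth (fun j => -Pi.single j 1) (neg_injective.comp single_wt_inj)]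
    have := h.2 ξ
    gcongr
    linarith

lemma rsum_fourth {ι : Type} [Fintype ι] [DecidableEq ι] {x : ι → F →L[ℂ] F} (h : RCBound x 1)
    (ξ : F) :
    ∑ ω, ‖star (rsum x ω) (rsum x ω ξ)‖ ^ 2 ≤ Fintype.card (ι → ZMod 3) * (2 * ‖ξ‖ ^ 2) := by
  have h1 : ∀ ω, star (rsum x ω) (rsum x ω ξ) = ∑ j, ∑ k,
      (starRingEnd ℂ (phase (Pi.single j 1) ω) * phase (Pi.single k 1) ω) •
        star (x j) (x k ξ) := by
    intro ω
    rw [star_rsum]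
    simp only [rsum, sum_apply, smul_apply, map_sum, map_smul, Finset.smul_sum]
    rw [Finset.sum_comm]
    refine Finset.sum_congr rfl fun k _ => Finset.sum_congr rfl fun j _ => ?_
    rw [smul_smul, mul_comm]
  simp_rw [h1]
  refine (phase_fourth _).trans ?_
  gcongr
  have h2 := h.sum_star_mul ξ
  have h3 : ∑ j, ∑ k, ‖star (x j) (x k ξ)‖ ^ 2 ≤ ‖ξ‖ ^ 2 := by
    rw [Finset.sum_comm]
    have := h.1 ξ
    rw [one_mul] at this
    refine le_trans (Finset.sum_le_sum fun k _ => ?_) this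
    simpa using h.2 (x k ξ)
  nlinarith [norm_nonneg (∑ j, star (x j) (x j ξ)), norm_nonneg ξ]

lemma rsum_fourth' {ι : Type} [Fintype ι] [DecidableEq ι] {x : ι → F →L[ℂ] F} (h : RCBound x 1)
    (ξ : F) :
    ∑ ω, ‖rsum x ω (star (rsum x ω) ξ)‖ ^ 2 ≤ Fintype.card (ι → ZMod 3) * (2 * ‖ξ‖ ^ 2) := by
  have h1 : ∀ ω, rsum x ω (star (rsum x ω) ξ) = ∑ j, ∑ k,
      (starRingEnd ℂ (phase (Pi.single j 1) ω) * phase (Pi.single k 1) ω) •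
        x k (star (x j) ξ) := by
    intro ω
    rw [star_rsum]
    simp only [rsum, sum_apply, smul_apply, map_sum, map_smul, Finset.smul_sum]
    refine Finset.sum_congr rfl fun k _ => Finset.sum_congr rfl fun j _ => ?_
    rw [smul_smul, mul_comm]
  simp_rw [h1]
  refine (phase_fourth _).trans ?_
  gcongr
  have h2 := h.star.sum_star_mul ξ
  simp only [star_star] at h2
  have h3 : ∑ j, ∑ k, ‖x k (star (x j) ξ)‖ ^ 2 ≤ ‖ξ‖ ^ 2 := by
    have := h.2 ξ
    rw [one_mul] at this
    refine le_trans (Finset.sum_le_sum fun k _ => ?_) this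
    simpa using h.1 (star (x k) ξ)
  nlinarith [norm_nonneg (∑ j, x j (star (x j) ξ)), norm_nonneg ξ]

lemma rsum_split {ι : Type} [Fintype ι] [DecidableEq ι] {x : ι → F →L[ℂ] F} (h : RCBound x 1) :
    ∃ T : (ι → ZMod 3) → F →L[ℂ] F, (∀ ω, ‖T ω‖ ≤ 2) ∧
      RCBound T (Fintype.card (ι → ZMod 3)) ∧
      RCBound (fun ω => rsum x ω - T ω) ((1/16) * Fintype.card (ι → ZMod 3)) := by
  choose T hT using fun ω => trunc (rsum x ω)
  refine ⟨T, fun ω => (hT ω).1, ⟨fun ξ => ?_, fun ξ => ?_⟩, ⟨fun ξ => ?_, fun ξ => ?_⟩⟩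
  · refine le_trans (Finset.sum_le_sum fun ω _ => ?_) ((rsum_rc h).1 ξ)
    have := (hT ω).2.1 ξ
    gcongr
  · refine le_trans (Finset.sum_le_sum fun ω _ => ?_) ((rsum_rc h).2 ξ)
    have := (hT ω).2.2.1 ξ
    gcongr
  · refine le_trans (Finset.sum_le_sum fun ω _ => (hT ω).2.2.2.1 ξ) ?_
    rw [← Finset.mul_sum]
    have := rsum_fourth h ξ
    have hc : (0 : ℝ) ≤ Fintype.card (ι → ZMod 3) * ‖ξ‖ ^ 2 := by positivity
    linarith
  · refine le_trans (Finset.sum_le_sum fun ω _ => (hT ω).2.2.2.2 ξ) ?_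
    rw [← Finset.mul_sum]
    have := rsum_fourth' h ξ
    have hc : (0 : ℝ) ≤ Fintype.card (ι → ZMod 3) * ‖ξ‖ ^ 2 := by positivity
    linarith

lemma GTBound.improve {φ : (F →L[ℂ] F) →ₗ[ℂ] (F →L[ℂ] F) →ₗ[ℂ] ℂ} {C K : ℝ} (hC : 0 ≤ C)
    (hφ : ∀ x y, ‖φ x y‖ ≤ C * ‖x‖ * ‖y‖) (h : GTBound φ K) : GTBound φ (4 * C + K / 2) := by
  classical
  intro ι _ x y hx hy
  obtain ⟨T, hT1, hT2, hT3⟩ := rsum_split hx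
  obtain ⟨U, hU1, hU2, hU3⟩ := rsum_split hy.star
  set N : ℝ := (Fintype.card (ι → ZMod 3) : ℝ) with hN
  have hNpos : 0 < N := by rw [hN]; exact_mod_cast Fintype.card_pos
  have e1 : (1/16) * N = ((1/4) * √N) ^ 2 := by rw [mul_pow, Real.sq_sqrt hNpos.le]; norm_num
  have e2 : N = √N ^ 2 := (Real.sq_sqrt hNpos.le).symm
  have e3 := (rsum_rc hy.star).star
  rw [← hN] at e3
  rw [e1] at hT3 hU3
  rw [e2] at hT2 e3
  have hs : 0 < √N := Real.sqrt_pos.2 hNpos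
  have b1 := h.scaled (by positivity) hs hT3 e3
  have b2 := h.scaled hs (by positivity) hT2 hU3.star
  have b3 : ‖∑ ω, φ (T ω) (star (U ω))‖ ≤ N * (4 * C) := by
    refine (norm_sum_le _ _).trans ?_
    refine (Finset.sum_le_sum (g := fun _ => 4 * C) fun ω _ => ?_).trans ?_
    · refine (hφ _ _).trans ?_
      rw [norm_star]
      have := hT1 ω; have := hU1 ω
      calc C * ‖T ω‖ * ‖U ω‖ ≤ C * 2 * 2 := by gcongr
        _ = 4 * C := by ring
    · simp [hN]
  have tot : (N : ℂ) * ∑ j, φ (x j) (y j) =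
      ∑ ω, φ (rsum x ω - T ω) (star (rsum (fun j => star (y j)) ω)) +
      ∑ ω, φ (T ω) (star (rsum (fun j => star (y j)) ω - U ω)) + ∑ ω, φ (T ω) (star (U ω)) := by
    have := phase_orth_bilin (fun j : ι => (Pi.single j 1 : ι → ZMod 3)) single_wt_inj φ x y
    rw [hN]
    push_cast
    rw [← this, ← Finset.sum_add_distrib, ← Finset.sum_add_distrib]
    refine Finset.sum_congr rfl fun ω _ => ?_
    have e : star (rsum (fun j => star (y j)) ω) =
        ∑ a, (starRingEnd ℂ) (phase (Pi.single a 1) ω) • y a := by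
      rw [star_rsum]; simp
    rw [star_sub, map_sub, map_sub, LinearMap.sub_apply, e]
    simp only [rsum]
    ring
  have fin : N * ‖∑ j, φ (x j) (y j)‖ ≤ N * (4 * C + K / 2) := by
    calc N * ‖∑ j, φ (x j) (y j)‖ = ‖(N : ℂ) * ∑ j, φ (x j) (y j)‖ := by
          rw [norm_mul, Complex.norm_real, Real.norm_of_nonneg hNpos.le]
      _ ≤ K * (1 / 4 * √N) * √N + K * √N * (1 / 4 * √N) + N * (4 * C) := by
          rw [tot]
          exact (norm_add₃_le).trans (add_le_add (add_le_add b1 b2) b3)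
      _ = N * (4 * C + K / 2) := by
          nth_rewrite 6 [e2]
          nth_rewrite 5 [e2]
          ring
  exact le_of_mul_le_mul_left fin hNpos

lemma GTBound.trivial [FiniteDimensional ℂ F] {φ : (F →L[ℂ] F) →ₗ[ℂ] (F →L[ℂ] F) →ₗ[ℂ] ℂ} {C : ℝ}
    (hC : 0 ≤ C) (hφ : ∀ x y, ‖φ x y‖ ≤ C * ‖x‖ * ‖y‖) : ∃ K, GTBound φ K := by
  set b := stdOrthonormalBasis ℂ F
  set n := Module.finrank ℂ F
  have hn : ∀ x : F →L[ℂ] F, ‖x‖ ≤ ∑ a, ‖x (b a)‖ := by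
    intro x
    refine opNorm_le_bound _ (by positivity) fun ξ => ?_
    nth_rewrite 1 [← b.sum_repr ξ]
    rw [map_sum, Finset.sum_mul]
    refine (norm_sum_le _ _).trans (Finset.sum_le_sum fun a _ => ?_)
    rw [map_smul, norm_smul, mul_comm]
    gcongr
    rw [b.repr_apply_apply]
    simpa using norm_inner_le_norm (𝕜 := ℂ) (b a) ξ
  refine ⟨C * (n * n), fun ι _ x y hx hy => ?_⟩
  have key : ∀ a c, ∑ j, ‖x j (b a)‖ * ‖y j (b c)‖ ≤ 1 := by
    intro a c
    have h3 := Finset.sum_mul_sq_le_sq_mul_sq Finset.univ (fun j => ‖x j (b a)‖)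
      (fun j => ‖y j (b c)‖)
    have h4 := hx.1 (b a)
    have h5 := hy.1 (b c)
    simp only [OrthonormalBasis.norm_eq_one] at h4 h5
    norm_num at h4 h5
    have h6 : (∑ j, ‖x j (b a)‖ * ‖y j (b c)‖) ^ 2 ≤ 1 ^ 2 := by
      refine h3.trans ?_
      rw [one_pow]
      exact mul_le_one₀ h4 (Finset.sum_nonneg fun _ _ => by positivity) h5
    exact abs_le_of_sq_le_sq' h6 (by norm_num) |>.2
  calc ‖∑ j, φ (x j) (y j)‖ ≤ ∑ j, C * ((∑ a, ‖x j (b a)‖) * (∑ c, ‖y j (b c)‖)) := by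
        refine (norm_sum_le _ _).trans (Finset.sum_le_sum fun j _ => (hφ _ _).trans ?_)
        rw [mul_assoc]
        have := hn (x j); have := hn (y j)
        gcongr
    _ = C * ∑ a, ∑ c, ∑ j, ‖x j (b a)‖ * ‖y j (b c)‖ := by
        rw [← Finset.mul_sum]
        congr 1
        simp_rw [Finset.sum_mul_sum]
        rw [Finset.sum_comm]
        refine Finset.sum_congr rfl fun a _ => Finset.sum_comm
    _ ≤ C * ∑ a : Fin n, ∑ c : Fin n, 1 := by
        gcongr with a _ c _
        exact key a c
    _ = C * (n * n) := by simp

lemma GTBound.final [FiniteDimensional ℂ F] {φ : (F →L[ℂ] F) →ₗ[ℂ] (F →L[ℂ] F) →ₗ[ℂ] ℂ} {C : ℝ}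
    (hC : 0 ≤ C) (hφ : ∀ x y, ‖φ x y‖ ≤ C * ‖x‖ * ‖y‖) : GTBound φ (8 * C) := by
  obtain ⟨K, hK⟩ := GTBound.trivial hC hφ
  have h : ∀ n : ℕ, GTBound φ (8 * C + (1/2) ^ n * (K - 8 * C)) := by
    intro n
    induction n with
    | zero => simpa using hK
    | succ n ih =>
      have := ih.improve hC hφ
      convert this using 1
      ring
  intro ι _ x y hx hy
  have lim : Filter.Tendsto (fun n : ℕ => 8 * C + (1/2 : ℝ) ^ n * (K - 8 * C)) Filter.atTop
      (nhds (8 * C + 0 * (K - 8 * C))) :=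
    ((tendsto_pow_atTop_nhds_zero_of_lt_one (by norm_num) (by norm_num)).mul_const _).const_add _
  have := ge_of_tendsto' lim (fun n => h n ι x y hx hy)
  simpa using this
end Groth

set_option linter.unusedSectionVars false
/-! ### Compact operators and finite rank approximation -/

section Compact
open InnerProductSpace
variable {H : Type*} [NormedAddCommGroup H] [InnerProductSpace ℂ H] [CompleteSpace H]

/-- The projection onto the span of a finite part of a Hilbert basis. -/
def fproj {ι : Type*} (b : HilbertBasis ι ℂ H) (s : Finset ι) : H →L[ℂ] H :=
  ∑ i ∈ s, rankOne ℂ (b i) (b i)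

lemma fproj_apply {ι : Type*} (b : HilbertBasis ι ℂ H) (s : Finset ι) (ξ : H) :
    fproj b s ξ = ∑ i ∈ s, ⟪b i, ξ⟫ • b i := by
  simp [fproj, sum_apply]

lemma fproj_tendsto {ι : Type*} (b : HilbertBasis ι ℂ H) (ξ : H) :
    Filter.Tendsto (fun s => fproj b s ξ) Filter.atTop (nhds ξ) := by
  simp_rw [fproj_apply]
  have := b.hasSum_repr ξ
  simp_rw [b.repr_apply_apply] at this
  exact this

lemma fproj_star {ι : Type*} (b : HilbertBasis ι ℂ H) (s : Finset ι) :
    star (fproj b s) = fproj b s := by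
  simp [fproj, star_sum, star_eq_adjoint]

lemma fproj_norm_le {ι : Type*} (b : HilbertBasis ι ℂ H) (s : Finset ι) (ξ : H) :
    ‖fproj b s ξ‖ ≤ ‖ξ‖ := by
  have h1 : ‖fproj b s ξ‖ ^ 2 = ∑ i ∈ s, ‖(⟪b i, ξ⟫ : ℂ)‖ ^ 2 := by
    rw [fproj_apply]
    have := b.orthonormal.inner_sum (fun i => (⟪b i, ξ⟫ : ℂ)) (fun i => (⟪b i, ξ⟫ : ℂ)) s
    rw [inner_self_eq_norm_sq_to_K] at this
    simp_rw [RCLike.conj_mul] at this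
    exact_mod_cast this
  have h2 := b.orthonormal.sum_inner_products_le (x := ξ) (s := s)
  rw [← h1] at h2
  exact abs_le_of_sq_le_sq' h2 (norm_nonneg _) |>.2

lemma fproj_mul_tendsto {ι : Type*} (b : HilbertBasis ι ℂ H) {S : H →L[ℂ] H}
    (hS : IsCompactOperator S) :
    Filter.Tendsto (fun s => fproj b s * S) Filter.atTop (nhds S) := by
  rw [Metric.tendsto_nhds]
  intro ε hε
  have hc := (hS.isCompact_closure_image_closedBall (𝕜₁ := ℂ) 1).totallyBounded
  obtain ⟨t, htf, ht⟩ := Metric.totallyBounded_iff.1 hc (ε / 4) (by positivity)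
  have hev : ∀ᶠ s in Filter.atTop, ∀ y ∈ t, dist (fproj b s y) y < ε / 4 := by
    rw [htf.eventually_all]
    intro y _
    exact Metric.tendsto_nhds.1 (fproj_tendsto b y) (ε / 4) (by positivity)
  filter_upwards [hev] with s hs
  rw [dist_eq_norm]
  refine lt_of_le_of_lt (b := 3 * (ε / 4)) ?_ (by linarith)
  refine opNorm_le_of_unit_norm (by positivity) fun ξ hξ => ?_
  have hmem : S ξ ∈ closure (S '' Metric.closedBall 0 1) :=
    subset_closure ⟨ξ, by simp [hξ], rfl⟩
  obtain ⟨y, hy, hyd⟩ := Set.mem_iUnion₂.1 (ht hmem)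
  rw [Metric.mem_ball, dist_eq_norm] at hyd
  have h1 := hs y hy
  rw [dist_eq_norm] at h1
  have h2 := fproj_norm_le b s (S ξ - y)
  have h3 : (fproj b s * S - S) ξ = fproj b s (S ξ - y) + (fproj b s y - y) - (S ξ - y) := by
    simp
  rw [h3]
  have h4 := norm_sub_le (fproj b s (S ξ - y) + (fproj b s y - y)) (S ξ - y)
  have h5 := norm_add_le (fproj b s (S ξ - y)) (fproj b s y - y)
  linarith

lemma rankOne_compact (u v : H) : IsCompactOperator (rankOne ℂ u v : H →L[ℂ] H) := by
  have : IsCompactOperator (toSpanSingleton ℂ u : ℂ →L[ℂ] H) :=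
    ((isCompactOperator_id (E := ℂ)).clm_comp (toSpanSingleton ℂ u))
  exact this.comp_clm (innerSL ℂ v)

lemma isClosed_compact : IsClosed {S : H →L[ℂ] H | IsCompactOperator S} :=
  isClosed_setOfPred_isCompactOperator

/-- Induction for compact operators: any closed subspace containing rank one operators contains
all compact operators. -/
lemma compact_induction {P : (H →L[ℂ] H) → Prop} (h1 : ∀ u v, P (rankOne ℂ u v))
    (h0 : P 0) (hadd : ∀ x y, P x → P y → P (x + y)) (hcl : IsClosed {x | P x})
    {x : H →L[ℂ] H} (hx : IsCompactOperator x) : P x := by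
  obtain ⟨w, b, -⟩ := exists_hilbertBasis ℂ H
  refine hcl.mem_of_tendsto (fproj_mul_tendsto b hx) (Filter.Eventually.of_forall fun s => ?_)
  have : fproj b s * x = ∑ i ∈ s, rankOne ℂ (b i) (star x (b i)) := by
    simp only [fproj, Finset.sum_mul]
    refine Finset.sum_congr rfl fun i _ => ?_
    rw [star_eq_adjoint, mul_def, rankOne_comp]
  rw [this]
  show P _
  exact Finset.sum_induction _ P hadd h0 fun i _ => h1 _ _

lemma compact_star {x : H →L[ℂ] H} (hx : IsCompactOperator x) :
    IsCompactOperator (star x : H →L[ℂ] H) := by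
  refine compact_induction (P := fun x => IsCompactOperator (star x : H →L[ℂ] H)) ?_ ?_ ?_ ?_ hx
  · intro u v
    rw [star_eq_adjoint, adjoint_rankOne]
    exact rankOne_compact _ _
  · rw [star_zero]; exact isCompactOperator_zero
  · intro x y hx hy
    rw [star_add]; exact hx.add hy
  · exact isClosed_compact.preimage continuous_star

lemma fproj_conj_tendsto {ι : Type*} (b : HilbertBasis ι ℂ H) {S : H →L[ℂ] H}
    (hS : IsCompactOperator S) :
    Filter.Tendsto (fun s => fproj b s * S * fproj b s) Filter.atTop (nhds S) := by
  have h1 := fproj_mul_tendsto b hS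
  have h2 : Filter.Tendsto (fun s => S * fproj b s) Filter.atTop (nhds S) := by
    have := (fproj_mul_tendsto b (compact_star hS)).star
    simpa [fproj_star] using this
  have h3 : Filter.Tendsto (fun s => (fproj b s * S - S) * fproj b s) Filter.atTop (nhds 0) := by
    have h4 : Filter.Tendsto (fun s => ‖fproj b s * S - S‖) Filter.atTop (nhds 0) := by
      have := (h1.sub_const S).norm
      simpa using this
    refine squeeze_zero_norm (fun s => ?_) h4
    refine (norm_mul_le _ _).trans ?_
    refine mul_le_of_le_one_right (norm_nonneg _) ?_
    exact opNorm_le_bound _ zero_le_one fun ξ => by simpa using fproj_norm_le b s ξ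
  have h5 := h3.add h2
  rw [zero_add] at h5
  refine h5.congr fun s => ?_
  rw [sub_mul]; abel

/-- Trace formula: a bounded functional on `B(H)` is given on compact operators by a trace. -/
lemma trace_formula {ι : Type*} (b : HilbertBasis ι ℂ H) (Φ : (H →L[ℂ] H) →L[ℂ] ℂ)
    (T : H →L[ℂ] H) (hT : ∀ g h, Φ (rankOne ℂ g h) = ⟪h, T g⟫) {S : H →L[ℂ] H}
    (hS : IsCompactOperator S) : HasSum (fun i => (⟪b i, (S * T) (b i)⟫ : ℂ)) (Φ S) := by
  have h := (Φ.continuous.tendsto S).comp (fproj_mul_tendsto b hS)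
  refine Filter.Tendsto.congr (fun s => ?_) h
  simp only [Function.comp, fproj, Finset.sum_mul, map_sum]
  refine Finset.sum_congr rfl fun i _ => ?_
  rw [mul_def (rankOne ℂ (b i) (b i)), rankOne_comp, hT, adjoint_inner_left]
  rfl

/-- Bounded functionals define trace class operators. -/
lemma exists_density (Φ : (H →L[ℂ] H) →L[ℂ] ℂ) :
    ∃ T : H →L[ℂ] H, ∀ g h, Φ (rankOne ℂ g h) = ⟪h, T g⟫ := by
  have hb : ∀ h g, ‖Φ (rankOne ℂ g h)‖ ≤ ‖Φ‖ * ‖h‖ * ‖g‖ := fun h g => by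
    refine (Φ.le_opNorm _).trans ?_
    rw [norm_rankOne]; exact le_of_eq (by ring)
  let B : H →L⋆[ℂ] H →L[ℂ] ℂ := LinearMap.mkContinuous₂
    (LinearMap.mk₂'ₛₗ (starRingEnd ℂ) (RingHom.id ℂ) (fun h g => Φ (rankOne ℂ g h))
      (by intros; simp) (by intros; simp) (by intros; simp) (by intros; simp)) ‖Φ‖ hb
  refine ⟨adjoint (InnerProductSpace.continuousLinearMapOfBilin B), fun g h => ?_⟩
  rw [adjoint_inner_right, continuousLinearMapOfBilin_apply]
  rfl

lemma exists_density_unique {T T' : H →L[ℂ] H} (h : ∀ g k : H, (⟪k, T g⟫ : ℂ) = ⟪k, T' g⟫) :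
    T = T' := by
  ext g
  exact ext_inner_left ℂ fun k => h g k

lemma density_sum_bound (Φ : (H →L[ℂ] H) →L[ℂ] ℂ) (T : H →L[ℂ] H)
    (hT : ∀ g h, Φ (rankOne ℂ g h) = ⟪h, T g⟫) (n : ℕ) (e f : Fin n → H) (he : Orthonormal ℂ e)
    (hf : Orthonormal ℂ f) : ∑ i, ‖(⟪e i, T (f i)⟫ : ℂ)‖ ≤ ‖Φ‖ := by
  have hc : ∀ z : ℂ, ∃ c : ℂ, ‖c‖ ≤ 1 ∧ c * z = ‖z‖ := by
    intro z
    by_cases hz : z = 0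
    · exact ⟨0, by simp, by simp [hz]⟩
    · refine ⟨starRingEnd ℂ z / ‖z‖, ?_, ?_⟩
      · simp [hz]
      · have : (‖z‖ : ℂ) ≠ 0 := by simpa using hz
        field_simp
        rw [mul_comm, Complex.mul_conj']
  choose c hc1 hc2 using fun i => hc ⟪e i, T (f i)⟫
  set A : H →L[ℂ] H := ∑ i, c i • rankOne ℂ (f i) (e i) with hA
  have h1 : Φ A = ((∑ i, ‖(⟪e i, T (f i)⟫ : ℂ)‖ : ℝ) : ℂ) := by
    rw [hA, map_sum]
    push_cast
    refine Finset.sum_congr rfl fun i _ => ?_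
    rw [map_smul, hT, smul_eq_mul, hc2]
  have h2 : ‖A‖ ≤ 1 := by
    refine opNorm_le_bound _ zero_le_one fun ξ => ?_
    rw [one_mul]
    have e1 : A ξ = ∑ i, (c i * ⟪e i, ξ⟫) • f i := by
      simp [hA, sum_apply, mul_smul]
    have e2 : ‖A ξ‖ ^ 2 = ∑ i, ‖c i * (⟪e i, ξ⟫ : ℂ)‖ ^ 2 := by
      have := hf.inner_sum (fun i => c i * (⟪e i, ξ⟫ : ℂ)) (fun i => c i * (⟪e i, ξ⟫ : ℂ)) Finset.univ
      rw [← e1, inner_self_eq_norm_sq_to_K] at this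
      simp_rw [RCLike.conj_mul] at this
      exact_mod_cast this
    have e3 := he.sum_inner_products_le (x := ξ) (s := Finset.univ)
    refine abs_le_of_sq_le_sq' ?_ (norm_nonneg _) |>.2
    rw [e2]
    refine le_trans (Finset.sum_le_sum fun i _ => ?_) e3
    rw [norm_mul]
    have := hc1 i
    gcongr
    exact mul_le_of_le_one_left (norm_nonneg _) this
  have h3 := Φ.le_opNorm A
  rw [h1, Complex.norm_real, Real.norm_of_nonneg (by positivity)] at h3
  calc _ ≤ ‖Φ‖ * ‖A‖ := h3
    _ ≤ ‖Φ‖ := mul_le_of_le_one_right (norm_nonneg _) h2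
end Compact

/-! ### The Grothendieck inequality for compact operators -/

section GTCompact
variable {H : Type*} [NormedAddCommGroup H] [InnerProductSpace ℂ H] [CompleteSpace H]

/-- Compression of operators from a subspace to the whole space. -/
def inflate (V : Submodule ℂ H) [CompleteSpace V] : (V →L[ℂ] V) →ₗ[ℂ] (H →L[ℂ] H) where
  toFun T := V.subtypeL ∘L T ∘L V.orthogonalProjectionOnto
  map_add' := by intros; ext; simp
  map_smul' := by intros; ext; simp

lemma inflate_norm (V : Submodule ℂ H) [CompleteSpace V] (T : V →L[ℂ] V) :
    ‖inflate V T‖ ≤ ‖T‖ := by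
  refine opNorm_le_bound _ (opNorm_nonneg _) fun ξ => ?_
  show ‖T (V.orthogonalProjectionOnto ξ)‖ ≤ _
  refine (T.le_opNorm _).trans ?_
  gcongr
  simpa using V.orthogonalProjectionOnto.le_of_opNorm_le V.orthogonalProjectionOnto_norm_le ξ

lemma gt_compact_conj {ι' : Type*} (b : HilbertBasis ι' ℂ H) (s : Finset ι')
    {D : (H →L[ℂ] H) →ₗ[ℂ] (H →L[ℂ] H) →ₗ[ℂ] ℂ} {C : ℝ} (hC : 0 ≤ C)
    (hD : ∀ x y, ‖D x y‖ ≤ C * ‖x‖ * ‖y‖) {ι : Type} [Fintype ι] {x y : ι → H →L[ℂ] H}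
    (hx : RCBound x 1) (hy : RCBound y 1) :
    ‖∑ j, D (fproj b s * x j * fproj b s) (fproj b s * y j * fproj b s)‖ ≤ 8 * C := by
  classical
  let V : Submodule ℂ H := Submodule.span ℂ (s.image b : Set H)
  have : FiniteDimensional ℂ V := FiniteDimensional.span_finset ℂ (s.image b)
  have : CompleteSpace V := FiniteDimensional.complete ℂ V
  let φ : (V →L[ℂ] V) →ₗ[ℂ] (V →L[ℂ] V) →ₗ[ℂ] ℂ := D.compl₁₂ (inflate V) (inflate V)
  have hφ : ∀ S T, ‖φ S T‖ ≤ C * ‖S‖ * ‖T‖ := fun S T => by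
    refine (hD _ _).trans ?_
    have h1 := inflate_norm V S
    have h2 := inflate_norm V T
    gcongr
  have hGT := GTBound.final hC hφ
  set P := fproj b s with hP
  have hPV : ∀ ξ, P ξ ∈ V := fun ξ => by
    rw [hP, fproj_apply]
    refine Submodule.sum_mem _ fun i hi => Submodule.smul_mem _ _ (Submodule.subset_span ?_)
    simpa using ⟨i, hi, rfl⟩
  have hP1 : V.starProjection * P = P := by
    ext ξ
    exact V.starProjection_eq_self_iff.2 (hPV ξ)
  have hP2 : P * V.starProjection = P := by
    have := congrArg star hP1
    rw [star_mul, hP, fproj_star, (isSelfAdjoint_starProjection V).star_eq] at this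
    exact this
  let κ : (H →L[ℂ] H) → (V →L[ℂ] V) := fun A => V.orthogonalProjectionOnto ∘L A ∘L V.subtypeL
  have hκ : ∀ A, star (κ A) = κ (star A) := fun A => by
    simp only [κ, star_eq_adjoint, adjoint_comp, Submodule.adjoint_subtypeL,
      Submodule.adjoint_orthogonalProjectionOnto]
    rfl
  have hinf : ∀ A, inflate V (κ (P * A * P)) = P * A * P := fun A => by
    have : inflate V (κ (P * A * P)) = (V.starProjection * P) * A * (P * V.starProjection) := rfl
    rw [this, hP1, hP2]
  have hstar : ∀ A : H →L[ℂ] H, star (P * A * P) = P * star A * P := fun A => by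
    rw [star_mul, star_mul, hP, fproj_star, mul_assoc]
  have hn : ∀ (A : H →L[ℂ] H) (ξ : V), ‖κ (P * A * P) ξ‖ ≤ ‖A (P ξ)‖ := fun A ξ => by
    have h1 := V.orthogonalProjectionOnto.le_of_opNorm_le V.orthogonalProjectionOnto_norm_le
      (P (A (P ξ)))
    rw [one_mul] at h1
    exact h1.trans (fproj_norm_le b s _)
  have hb : ∀ {z : ι → H →L[ℂ] H}, (∀ ξ, ∑ j, ‖z j ξ‖ ^ 2 ≤ 1 * ‖ξ‖ ^ 2) → ∀ ξ : V,
      ∑ j, ‖κ (P * z j * P) ξ‖ ^ 2 ≤ 1 * ‖ξ‖ ^ 2 := fun {z} hz ξ => by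
    refine (Finset.sum_le_sum fun j _ => ?_).trans ((hz (P ξ)).trans ?_)
    · have := hn (z j) ξ
      gcongr
    · have := fproj_norm_le b s (ξ : H)
      have h2 : ‖(ξ : H)‖ = ‖ξ‖ := rfl
      rw [← h2]
      gcongr
  have hrc : ∀ {z : ι → H →L[ℂ] H}, RCBound z 1 → RCBound (fun j => κ (P * z j * P)) 1 :=
    fun {z} hz => by
      refine ⟨hb hz.1, fun ξ => ?_⟩
      simp only [hκ, hstar]
      exact hb hz.2 ξ
  have := hGT ι _ _ (hrc hx) (hrc hy)
  simpa [φ, hinf] using this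

lemma continuous_bilin {A : Type*} [NormedAddCommGroup A] [NormedSpace ℂ A] (D : A →ₗ[ℂ] A →ₗ[ℂ] ℂ)
    {C : ℝ} (hD : ∀ x y, ‖D x y‖ ≤ C * ‖x‖ * ‖y‖) : Continuous fun p : A × A => D p.1 p.2 :=
  (LinearMap.mkContinuous₂ D C hD).continuous₂

lemma tendsto_bilin {A α : Type*} [NormedAddCommGroup A] [NormedSpace ℂ A] (D : A →ₗ[ℂ] A →ₗ[ℂ] ℂ)
    {C : ℝ} (hD : ∀ x y, ‖D x y‖ ≤ C * ‖x‖ * ‖y‖) {l : Filter α} {f g : α → A} {x y : A}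
    (hf : Filter.Tendsto f l (nhds x)) (hg : Filter.Tendsto g l (nhds y)) :
    Filter.Tendsto (fun s => D (f s) (g s)) l (nhds (D x y)) :=
  ((continuous_bilin D hD).tendsto (x, y)).comp (hf.prodMk_nhds hg)

/-- The Grothendieck inequality for finite families of compact operators. -/
lemma gt_compact {D : (H →L[ℂ] H) →ₗ[ℂ] (H →L[ℂ] H) →ₗ[ℂ] ℂ} {C : ℝ} (hC : 0 ≤ C)
    (hD : ∀ x y, ‖D x y‖ ≤ C * ‖x‖ * ‖y‖) {ι : Type} [Fintype ι] {x y : ι → H →L[ℂ] H}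
    (hxc : ∀ j, IsCompactOperator (x j)) (hyc : ∀ j, IsCompactOperator (y j))
    (hx : RCBound x 1) (hy : RCBound y 1) : ‖∑ j, D (x j) (y j)‖ ≤ 8 * C := by
  obtain ⟨w, b, -⟩ := exists_hilbertBasis ℂ H
  have hlim : Filter.Tendsto (fun s => ‖∑ j, D (fproj b s * x j * fproj b s)
      (fproj b s * y j * fproj b s)‖) Filter.atTop (nhds ‖∑ j, D (x j) (y j)‖) := by
    refine Filter.Tendsto.norm (tendsto_finsetSum _ fun j _ => ?_)
    have h1 := fproj_conj_tendsto b (hxc j)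
    have h2 := fproj_conj_tendsto b (hyc j)
    exact tendsto_bilin D hD h1 h2
  exact le_of_tendsto' hlim fun s => gt_compact_conj b s hC hD hx hy

lemma rcbound_of_norm {ι : Type} [Fintype ι] (x : ι → H →L[ℂ] H) {c : ℝ}
    (h1 : ‖∑ j, star (x j) * x j‖ ≤ c) (h2 : ‖∑ j, x j * star (x j)‖ ≤ c) : RCBound x c := by
  have key : ∀ (z : ι → H →L[ℂ] H), ‖∑ j, star (z j) * z j‖ ≤ c → ∀ ξ,
      ∑ j, ‖z j ξ‖ ^ 2 ≤ c * ‖ξ‖ ^ 2 := fun z hz ξ => by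
    have e : ((∑ j, ‖z j ξ‖ ^ 2 : ℝ) : ℂ) = ⟪ξ, (∑ j, star (z j) * z j) ξ⟫ := by
      rw [sum_apply, inner_sum]
      push_cast
      refine Finset.sum_congr rfl fun j _ => ?_
      change _ = ⟪ξ, adjoint (z j) (z j ξ)⟫
      rw [adjoint_inner_right, inner_self_eq_norm_sq_to_K]
      rfl
    have e2 : ∑ j, ‖z j ξ‖ ^ 2 = ‖((∑ j, ‖z j ξ‖ ^ 2 : ℝ) : ℂ)‖ := by
      rw [Complex.norm_real, Real.norm_of_nonneg (by positivity)]
    rw [e2, e]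
    refine (norm_inner_le_norm _ _).trans ?_
    have := (∑ j, star (z j) * z j).le_of_opNorm_le hz ξ
    calc _ ≤ ‖ξ‖ * (c * ‖ξ‖) := by gcongr
      _ = _ := by ring
  exact ⟨key x h1, key (fun j => star (x j)) (by simpa using h2)⟩

lemma gt_compact_rc {D : (H →L[ℂ] H) →ₗ[ℂ] (H →L[ℂ] H) →ₗ[ℂ] ℂ} {C : ℝ} (hC : 0 ≤ C)
    (hD : ∀ x y, ‖D x y‖ ≤ C * ‖x‖ * ‖y‖) {ι : Type} [Fintype ι] {x : ι → H →L[ℂ] H}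
    (hxc : ∀ j, IsCompactOperator (x j)) {c : ℝ} (hc0 : 0 ≤ c) (hrc : RCBound x c) :
    ‖∑ j, D (x j) (star (x j))‖ ≤ 8 * C * c := by
  have key : ∀ ε > 0, ‖∑ j, D (x j) (star (x j))‖ ≤ 8 * C * (c + ε) := fun ε hε => by
    set t := (Real.sqrt (c + ε))⁻¹ with ht
    have hpos : 0 < c + ε := by linarith
    have ht2 : t ^ 2 = (c + ε)⁻¹ := by rw [ht, inv_pow, Real.sq_sqrt hpos.le]
    have h1 : RCBound (fun j => (t : ℂ) • x j) 1 := by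
      have h := hrc.smul t
      have hle : t ^ 2 * c ≤ 1 := by
        rw [ht2, inv_mul_le_iff₀ hpos]; linarith
      exact ⟨fun ξ => (h.1 ξ).trans (by gcongr), fun ξ => (h.2 ξ).trans (by gcongr)⟩
    have h2 := gt_compact hC hD (fun j => (hxc j).smul (t : ℂ))
      (fun j => compact_star ((hxc j).smul (t : ℂ))) h1 h1.star
    have h3 : ∑ j, D ((t : ℂ) • x j) (star ((t : ℂ) • x j)) =
        ((t ^ 2 : ℝ) : ℂ) * ∑ j, D (x j) (star (x j)) := by
      rw [Finset.mul_sum]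
      refine Finset.sum_congr rfl fun j _ => ?_
      simp [star_smul]
      ring
    erw [h3] at h2
    rw [norm_mul, Complex.norm_real, Real.norm_of_nonneg (by positivity), ht2,
      inv_mul_le_iff₀ hpos] at h2
    linarith
  have := ge_of_tendsto' (f := fun n : ℕ => 8 * C * (c + 1 / ((n : ℝ) + 1)))
    (x := Filter.atTop) (a := 8 * C * (c + 0)) (b := ‖∑ j, D (x j) (star (x j))‖)
    ((tendsto_one_div_add_atTop_nhds_zero_nat.const_add c).const_mul _)
    (fun n => key _ (by positivity))
  simpa using this

lemma gt_compact_pos {D : (H →L[ℂ] H) →ₗ[ℂ] (H →L[ℂ] H) →ₗ[ℂ] ℂ} {C : ℝ} (hC : 0 ≤ C)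
    (hD : ∀ x y, ‖D x y‖ ≤ C * ‖x‖ * ‖y‖) {ι : Type} [Fintype ι] {x : ι → H →L[ℂ] H}
    (hxc : ∀ j, IsCompactOperator (x j)) :
    ∑ j, max (D (x j) (star (x j))).re 0 ≤
      8 * C * ‖∑ j, star (x j) * x j‖ + 8 * C * ‖∑ j, x j * star (x j)‖ := by
  rw [← mul_add]
  set c := ‖∑ j, star (x j) * x j‖ + ‖∑ j, x j * star (x j)‖ with hc
  have hc0 : 0 ≤ c := by positivity
  have hrc : RCBound x c := rcbound_of_norm x
    (by rw [hc]; linarith [norm_nonneg (∑ j, x j * star (x j))])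
    (by rw [hc]; linarith [norm_nonneg (∑ j, star (x j) * x j)])
  let x' : ι → H →L[ℂ] H := fun j => if 0 ≤ (D (x j) (star (x j))).re then x j else 0
  have hxc' : ∀ j, IsCompactOperator (x' j) := fun j => by
    simp only [x']
    split_ifs
    · exact hxc j
    · exact isCompactOperator_zero
  have hrc' : RCBound x' c := by
    refine ⟨fun ξ => le_trans (Finset.sum_le_sum fun j _ => ?_) (hrc.1 ξ),
      fun ξ => le_trans (Finset.sum_le_sum fun j _ => ?_) (hrc.2 ξ)⟩
    · simp only [x']
      split_ifs
      · exact le_rfl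
      · simp
    · simp only [x']
      split_ifs
      · exact le_rfl
      · simp
  have h := gt_compact_rc hC hD hxc' hc0 hrc'
  refine le_trans (le_of_eq ?_) ((Complex.re_le_norm _).trans h)
  rw [Complex.re_sum]
  refine Finset.sum_congr rfl fun j _ => ?_
  simp only [x']
  split_ifs with h0
  · exact max_eq_left h0
  · rw [max_eq_right (not_le.1 h0).le]
    simp
end GTCompact

/-! ### Hermitian symmetry on compact operators -/

section Herm
open InnerProductSpace
variable {H : Type*} [NormedAddCommGroup H] [InnerProductSpace ℂ H] [CompleteSpace H]

lemma rankOne_polar (u v : H) : (rankOne ℂ u v : H →L[ℂ] H) =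
    (1/4 : ℂ) • (rankOne ℂ (u + v) (u + v) + (-1 : ℂ) • rankOne ℂ (u + (-1 : ℂ) • v) (u + (-1 : ℂ) • v)
      + Complex.I • rankOne ℂ (u + Complex.I • v) (u + Complex.I • v)
      + (-Complex.I) • rankOne ℂ (u + (-Complex.I) • v) (u + (-Complex.I) • v)) := by
  ext ξ
  simp only [smul_apply, add_apply, rankOne_apply, inner_add_left, inner_smul_left]
  have hI := Complex.I_mul_I
  simp only [map_neg, Complex.conj_I, map_one, neg_neg]
  match_scalars
  · ring_nf; simp; ring
  · ring_nf; simp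

lemma compact_induction_proj {P : (H →L[ℂ] H) → Prop} (h1 : ∀ w, P (rankOne ℂ w w))
    (hsmul : ∀ (c : ℂ) x, P x → P (c • x)) (hadd : ∀ x y, P x → P y → P (x + y))
    (hcl : IsClosed {x | P x}) {x : H →L[ℂ] H} (hx : IsCompactOperator x) : P x := by
  refine compact_induction (fun u v => ?_) ?_ hadd hcl hx
  · rw [rankOne_polar]
    exact hsmul _ _ (hadd _ _ (hadd _ _ (hadd _ _ (h1 _) (hsmul _ _ (h1 _)))
      (hsmul _ _ (h1 _))) (hsmul _ _ (h1 _)))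
  · simpa using h1 0

lemma rankOne_eq_proj (w : H) : ∃ p : H →L[ℂ] H, IsIdempotentElem p ∧ IsSelfAdjoint p ∧
    (rankOne ℂ w w : H →L[ℂ] H) = ((‖w‖ ^ 2 : ℝ) : ℂ) • p := by
  by_cases hw : w = 0
  · exact ⟨0, by simp [IsIdempotentElem], .zero _, by simp [hw]⟩
  have hn : ((‖w‖ : ℝ) : ℂ) ≠ 0 := by simpa using hw
  refine ⟨((‖w‖ ^ 2 : ℝ) : ℂ)⁻¹ • rankOne ℂ w w, ?_, ?_, ?_⟩
  · ext ξ
    simp [smul_smul]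
    congr 1
    have : (⟪w, w⟫ : ℂ) = (‖w‖ : ℂ) ^ 2 := inner_self_eq_norm_sq_to_K w
    field_simp
  · rw [IsSelfAdjoint, star_smul, star_eq_adjoint, adjoint_rankOne]
    simp
  · rw [smul_smul, mul_inv_cancel₀, one_smul]
    push_cast
    exact pow_ne_zero _ hn

lemma herm_compact {D : (H →L[ℂ] H) →ₗ[ℂ] (H →L[ℂ] H) →ₗ[ℂ] ℂ} {C : ℝ}
    (hD : ∀ x y, ‖D x y‖ ≤ C * ‖x‖ * ‖y‖)
    (hh : ∀ p q : H →L[ℂ] H, IsIdempotentElem p → IsSelfAdjoint p → IsIdempotentElem q →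
      IsSelfAdjoint q → D p q = starRingEnd ℂ (D q p)) {x y : H →L[ℂ] H}
    (hx : IsCompactOperator x) (hy : IsCompactOperator y) :
    D x y = starRingEnd ℂ (D (star y) (star x)) := by
  have hstar : ∀ w : H, star (rankOne ℂ w w : H →L[ℂ] H) = rankOne ℂ w w := fun w => by
    rw [star_eq_adjoint, adjoint_rankOne]
  have hcont := continuous_bilin D hD
  have hP : ∀ z : H, D x (rankOne ℂ z z) = starRingEnd ℂ (D (rankOne ℂ z z) (star x)) := by
    intro z
    refine compact_induction_proj (P := fun x => D x (rankOne ℂ z z) =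
      starRingEnd ℂ (D (rankOne ℂ z z) (star x))) ?_ ?_ ?_ ?_ hx
    · intro w
      rw [hstar]
      obtain ⟨p, hp1, hp2, hp⟩ := rankOne_eq_proj w
      obtain ⟨q, hq1, hq2, hq⟩ := rankOne_eq_proj z
      rw [hp, hq]
      simp only [map_smul, LinearMap.smul_apply, smul_eq_mul, map_mul, Complex.conj_ofReal]
      rw [hh p q hp1 hp2 hq1 hq2]
      ring
    · intro c x h
      simp only [map_smul, LinearMap.smul_apply, smul_eq_mul, map_mul, star_smul, h]
      simp
    · intro x y hx hy
      simp only [map_add, LinearMap.add_apply, star_add, hx, hy]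
    · refine isClosed_eq ?_ ?_
      · exact hcont.comp (by fun_prop : Continuous fun x : H →L[ℂ] H => (x, rankOne ℂ z z))
      · exact Complex.continuous_conj.comp
          (hcont.comp (continuous_const.prodMk continuous_star))
  refine compact_induction_proj (P := fun y => D x y =
      starRingEnd ℂ (D (star y) (star x))) ?_ ?_ ?_ ?_ hy
  · intro w
    rw [hstar, hP]
  · intro c y h
    simp only [map_smul, LinearMap.smul_apply, smul_eq_mul, map_mul, star_smul, h]
    simp
  · intro y z hy hz
    simp only [map_add, LinearMap.add_apply, star_add, hy, hz]
  · refine isClosed_eq ?_ ?_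
    · exact hcont.comp (continuous_const.prodMk continuous_id)
    · exact Complex.continuous_conj.comp (hcont.comp (continuous_star.prodMk continuous_const))
end Herm

/-! ### A Hahn-Banach argument and factorisation of positive forms -/

section HahnBanach

lemma hb_aux {V K : Type*} [AddCommGroup V] [Module ℝ V] (n : V → ℝ)
    (n_smul : ∀ c : ℝ, 0 < c → ∀ v, n (c • v) = c * n v) (n_add : ∀ v w, n (v + w) ≤ n v + n w)
    (n_neg : ∀ v, n (-v) = n v) (q : K → V) (r : K → ℝ)
    (hscale : ∀ c : ℝ, 0 < c → ∃ σ : K → K, (∀ k, q (σ k) = c • q k) ∧ ∀ k, r (σ k) = c * r k)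
    (hyp : ∀ l : List K, (l.map r).sum ≤ n (l.map q).sum) :
    ∃ f : V →ₗ[ℝ] ℝ, (∀ v, f v ≤ n v) ∧ ∀ k, r k ≤ f (q k) := by
  let N : V → ℝ := fun v => ⨅ l : List K, (n (v + (l.map q).sum) - (l.map r).sum)
  have hlow : ∀ v (l : List K), - n v ≤ n (v + (l.map q).sum) - (l.map r).sum := fun v l => by
    have h1 := hyp l
    have h2 := n_add (v + (l.map q).sum) (-v)
    rw [n_neg, show v + (l.map q).sum + -v = (l.map q).sum by abel] at h2
    linarith
  have hbdd : ∀ v, BddBelow (Set.range fun l : List K =>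
      (n (v + (l.map q).sum) - (l.map r).sum)) := fun v =>
    ⟨- n v, by rintro _ ⟨l, rfl⟩; exact hlow v l⟩
  have hNle : ∀ v (l : List K), N v ≤ n (v + (l.map q).sum) - (l.map r).sum := fun v l =>
    ciInf_le (hbdd v) l
  have hhom1 : ∀ c : ℝ, 0 < c → ∀ v, N (c • v) ≤ c * N v := fun c hc v => by
    obtain ⟨σ, hσ1, hσ2⟩ := hscale c hc
    rw [← div_le_iff₀' hc]
    refine le_ciInf fun l => ?_
    rw [div_le_iff₀' hc]
    refine (hNle (c • v) (l.map σ)).trans (le_of_eq ?_)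
    have e1 : ((l.map σ).map q).sum = c • (l.map q).sum := by
      rw [List.smul_sum, List.map_map, List.map_map]
      congr 1
      exact List.map_congr_left fun k _ => hσ1 k
    have e2 : ((l.map σ).map r).sum = c * (l.map r).sum := by
      rw [← List.sum_map_mul_left, List.map_map]
      congr 1
      exact List.map_congr_left fun k _ => hσ2 k
    rw [e1, e2, ← smul_add, n_smul c hc]
    ring
  have hhom : ∀ c : ℝ, 0 < c → ∀ v, N (c • v) = c * N v := fun c hc v => by
    refine le_antisymm (hhom1 c hc v) ?_
    have := hhom1 c⁻¹ (inv_pos.2 hc) (c • v)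
    rw [smul_smul, inv_mul_cancel₀ hc.ne', one_smul] at this
    calc c * N v ≤ c * (c⁻¹ * N (c • v)) := by gcongr
      _ = _ := by field_simp
  have hadd : ∀ v w, N (v + w) ≤ N v + N w := fun v w => by
    refine le_ciInf_add_ciInf fun l m => ?_
    refine (hNle (v + w) (l ++ m)).trans ?_
    have := n_add (v + (l.map q).sum) (w + (m.map q).sum)
    rw [List.map_append, List.map_append, List.sum_append, List.sum_append,
      show v + w + ((l.map q).sum + (m.map q).sum) =
        (v + (l.map q).sum) + (w + (m.map q).sum) by abel]
    linarith
  have hN0 : 0 ≤ N 0 := by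
    have := hhom 2 (by norm_num) 0
    rw [smul_zero] at this
    linarith
  obtain ⟨f, -, hf⟩ := exists_extension_of_le_sublinear (⊥ : V →ₗ.[ℝ] ℝ) N hhom hadd (by
    rintro ⟨x, hx⟩
    have hx0 : x = 0 := (Submodule.mem_bot ℝ).1 hx
    subst hx0
    have : (⊥ : V →ₗ.[ℝ] ℝ) ⟨0, hx⟩ = 0 := map_zero (⊥ : V →ₗ.[ℝ] ℝ).toFun
    rw [this]
    exact hN0)
  refine ⟨f, fun v => (hf v).trans ?_, fun k => ?_⟩
  · simpa using hNle v []
  · have h0 : n 0 = 0 := by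
      have := n_smul 2 (by norm_num) 0
      rw [smul_zero] at this
      linarith
    have h1 := (hf (-q k)).trans (hNle (-q k) [k])
    simp [h0] at h1
    exact h1

lemma core_factor {V : Type u} [AddCommGroup V] [Module ℂ V] (c : PreInnerProductSpace.Core ℂ V) :
    ∃ (I : Type u) (f : I → V →ₗ[ℂ] ℂ),
      (∀ x y, HasSum (fun i => starRingEnd ℂ (f i x) * f i y) (c.inner x y)) ∧
      ∀ i x, ‖f i x‖ ^ 2 ≤ (c.inner x x).re := by
  let : SeminormedAddCommGroup V := InnerProductSpace.Core.toSeminormedAddCommGroup (c := c)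
  let : InnerProductSpace ℂ V := InnerProductSpace.ofCore c
  obtain ⟨w, b, -⟩ := exists_hilbertBasis ℂ (UniformSpace.Completion V)
  have hin : ∀ x y : V, (⟪x, y⟫ : ℂ) = c.inner x y := fun x y => rfl
  refine ⟨w, fun i => ((innerSL ℂ (b i)) ∘L UniformSpace.Completion.toComplL).toLinearMap,
    fun x y => ?_, fun i x => ?_⟩
  · have := b.hasSum_inner_mul_inner (x : UniformSpace.Completion V) (y : UniformSpace.Completion V)
    rw [UniformSpace.Completion.inner_coe, hin] at this
    refine this.congr_fun fun i => ?_
    simp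
  · have h1 := norm_inner_le_norm (𝕜 := ℂ) (b i) (x : UniformSpace.Completion V)
    rw [b.orthonormal.1 i, one_mul, UniformSpace.Completion.norm_coe] at h1
    have h2 : (c.inner x x).re = ‖x‖ ^ 2 := by
      rw [← hin]; exact inner_self_eq_norm_sq (𝕜 := ℂ) x
    rw [h2]
    exact pow_le_pow_left₀ (norm_nonneg _) h1 2
end HahnBanach

/-! ### Decomposition of the form on compact operators -/

section Decomp
variable {H : Type u} [NormedAddCommGroup H] [InnerProductSpace ℂ H] [CompleteSpace H]

lemma hb_compact {D : (H →L[ℂ] H) →ₗ[ℂ] (H →L[ℂ] H) →ₗ[ℂ] ℂ} {C : ℝ} (hC : 0 ≤ C)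
    (hD : ∀ x y, ‖D x y‖ ≤ C * ‖x‖ * ‖y‖) :
    ∃ f : ((H →L[ℂ] H) × (H →L[ℂ] H)) →ₗ[ℝ] ℝ,
      (∀ a b, f (a, b) ≤ 8 * C * ‖a‖ + 8 * C * ‖b‖) ∧
      ∀ x : H →L[ℂ] H, IsCompactOperator x →
        max (D x (star x)).re 0 ≤ f (star x * x, x * star x) := by
  obtain ⟨f, hf1, hf2⟩ := hb_aux (V := (H →L[ℂ] H) × (H →L[ℂ] H))
    (K := {x : H →L[ℂ] H // IsCompactOperator x})
    (fun v => 8 * C * ‖v.1‖ + 8 * C * ‖v.2‖)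
    (fun c hc v => by
      simp only [Prod.smul_fst, Prod.smul_snd, norm_smul, Real.norm_of_nonneg hc.le]
      ring)
    (fun v w => by
      have h1 := norm_add_le v.1 w.1
      have h2 := norm_add_le v.2 w.2
      simp only [Prod.fst_add, Prod.snd_add]
      have h3 := mul_le_mul_of_nonneg_left h1 (by positivity : 0 ≤ 8 * C)
      have h4 := mul_le_mul_of_nonneg_left h2 (by positivity : 0 ≤ 8 * C)
      linarith)
    (fun v => by simp)
    (fun x => (star x.1 * x.1, x.1 * star x.1)) (fun x => max (D x.1 (star x.1)).re 0)
    (fun c hc => by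
      have hs : ((Real.sqrt c : ℝ) : ℂ) * ((Real.sqrt c : ℝ) : ℂ) = ((c : ℝ) : ℂ) := by
        rw [← Complex.ofReal_mul, Real.mul_self_sqrt hc.le]
      have hsc : ∀ A : H →L[ℂ] H, c • A = (c : ℂ) • A := fun A => (Complex.coe_smul c A).symm
      refine ⟨fun x => ⟨((Real.sqrt c : ℝ) : ℂ) • x.1, x.2.smul _⟩, fun x => ?_, fun x => ?_⟩
      · simp only [star_smul, smul_mul_assoc, mul_smul_comm, smul_smul, Complex.star_def,
          Complex.conj_ofReal, hs, Prod.smul_mk, hsc]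
      · simp only [star_smul, map_smul, LinearMap.smul_apply, smul_eq_mul, Complex.star_def,
          Complex.conj_ofReal, ← mul_assoc, hs]
        rw [Complex.re_ofReal_mul, mul_max_of_nonneg _ _ hc.le, mul_zero])
    (fun l => by
      have h := gt_compact_pos hC hD (x := fun i : Fin l.length => (l[i]).1) (fun i => (l[i]).2)
      have e1 := Fin.sum_univ_fun_getElem l (fun x => max (D x.1 (star x.1)).re 0)
      have e2 := Fin.sum_univ_fun_getElem l (fun x => (star x.1 * x.1, x.1 * star x.1))
      rw [← e1, ← e2, Prod.fst_sum, Prod.snd_sum]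
      exact h)
  exact ⟨f, fun a b => hf1 (a, b), fun x hx => hf2 ⟨x, hx⟩⟩

lemma factor_compact (Q : (H →L[ℂ] H) → (H →L[ℂ] H) → ℂ)
    (hsymm : ∀ x y : H →L[ℂ] H, IsCompactOperator x → IsCompactOperator y →
      starRingEnd ℂ (Q y x) = Q x y)
    (hadd : ∀ x y z, Q (x + y) z = Q x z + Q y z)
    (hsmul : ∀ (c : ℂ) x y, Q (c • x) y = starRingEnd ℂ c * Q x y)
    (hpos : ∀ x : H →L[ℂ] H, IsCompactOperator x → 0 ≤ (Q x x).re) {C : ℝ} (hC : 0 ≤ C)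
    (hb : ∀ x : H →L[ℂ] H, IsCompactOperator x → (Q x x).re ≤ C * ‖x‖ ^ 2) :
    ∃ (I : Type u) (f : I → (H →L[ℂ] H) →L[ℂ] ℂ), ∀ x y : H →L[ℂ] H, IsCompactOperator x →
      IsCompactOperator y → HasSum (fun i => starRingEnd ℂ (f i x) * f i y) (Q x y) := by
  let K : Submodule ℂ (H →L[ℂ] H) := compactOperator (RingHom.id ℂ) H H
  let c : PreInnerProductSpace.Core ℂ K :=
    { inner := fun x y => Q x y
      conj_inner_symm := fun x y => hsymm x y x.2 y.2
      re_inner_nonneg := fun x => hpos x x.2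
      add_left := fun x y z => hadd x y z
      smul_left := fun x y r => hsmul r x y }
  obtain ⟨I, f, hf1, hf2⟩ := core_factor c
  have hfb : ∀ i x, ‖f i x‖ ≤ Real.sqrt C * ‖x‖ := fun i x => by
    have h1 : ‖f i x‖ ^ 2 ≤ C * ‖x‖ ^ 2 := (hf2 i x).trans (hb x x.2)
    refine abs_le_of_sq_le_sq' ?_ (by positivity) |>.2
    rwa [mul_pow, Real.sq_sqrt hC]
  choose g hg using fun i => exists_extension_norm_eq K ((f i).mkContinuous (Real.sqrt C) (hfb i))
  refine ⟨I, g, fun x y hx hy => ?_⟩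
  have h := hf1 ⟨x, hx⟩ ⟨y, hy⟩
  refine h.congr_fun fun i => ?_
  rw [(hg i).1 ⟨x, hx⟩, (hg i).1 ⟨y, hy⟩]
  rfl

lemma decomp_compact {D : (H →L[ℂ] H) →ₗ[ℂ] (H →L[ℂ] H) →ₗ[ℂ] ℂ} {C : ℝ} (hC : 0 ≤ C)
    (hD : ∀ x y, ‖D x y‖ ≤ C * ‖x‖ * ‖y‖)
    (hh : ∀ x y : H →L[ℂ] H, IsCompactOperator x → IsCompactOperator y →
      D x y = starRingEnd ℂ (D (star y) (star x))) :
    ∃ (I₁ I₂ : Type u) (f₁ : I₁ → (H →L[ℂ] H) →L[ℂ] ℂ) (f₂ : I₂ → (H →L[ℂ] H) →L[ℂ] ℂ)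
      (P Q : (H →L[ℂ] H) → (H →L[ℂ] H) → ℂ),
      (∀ x y : H →L[ℂ] H, IsCompactOperator x → IsCompactOperator y →
        HasSum (fun i => starRingEnd ℂ (f₁ i x) * f₁ i y) (P x y)) ∧
      (∀ x y : H →L[ℂ] H, IsCompactOperator x → IsCompactOperator y →
        HasSum (fun i => starRingEnd ℂ (f₂ i x) * f₂ i y) (Q x y)) ∧
      ∀ x y, D y (star x) = P x y - Q x y := by
  obtain ⟨f, hf1, hf2⟩ := hb_compact hC hD
  obtain ⟨g₁, hg₁⟩ : ∃ g : (H →L[ℂ] H) →ₗ[ℂ] ℂ, ∀ a, (g a).re = f (a, 0) :=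
    ⟨Module.Dual.extendRCLike (𝕜 := ℂ) (f.comp (LinearMap.inl ℝ (H →L[ℂ] H) (H →L[ℂ] H))),
      fun a => Module.Dual.re_extendRCLike_apply (𝕜 := ℂ) _ a⟩
  obtain ⟨g₂, hg₂⟩ : ∃ g : (H →L[ℂ] H) →ₗ[ℂ] ℂ, ∀ a, (g a).re = f (0, a) :=
    ⟨Module.Dual.extendRCLike (𝕜 := ℂ) (f.comp (LinearMap.inr ℝ (H →L[ℂ] H) (H →L[ℂ] H))),
      fun a => Module.Dual.re_extendRCLike_apply (𝕜 := ℂ) _ a⟩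
  let h : (H →L[ℂ] H) → (H →L[ℂ] H) → ℂ := fun x y => g₁ (star x * y) + g₂ (y * star x)
  let P : (H →L[ℂ] H) → (H →L[ℂ] H) → ℂ := fun x y => (1/2) * (h x y + starRingEnd ℂ (h y x))
  have hPre : ∀ x, (P x x).re = f (star x * x, x * star x) := fun x => by
    have e : P x x = ((h x x).re : ℂ) := by
      simp only [P]
      rw [Complex.add_conj]
      push_cast
      ring
    rw [e, Complex.ofReal_re]
    simp only [h, Complex.add_re, hg₁, hg₂]
    rw [← map_add, Prod.mk_add_mk, add_zero, zero_add]
  have hPsymm : ∀ x y, starRingEnd ℂ (P y x) = P x y := fun x y => by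
    have h2 : starRingEnd ℂ (1/2) = 1/2 := by rw [map_div₀, map_one, map_ofNat]
    simp only [P, map_mul, map_add, Complex.conj_conj, h2]
    ring
  have hPadd : ∀ x y z, P (x + y) z = P x z + P y z := fun x y z => by
    simp only [P, h, star_add, add_mul, mul_add, map_add]
    ring
  have hPsmul : ∀ (c : ℂ) x y, P (c • x) y = starRingEnd ℂ c * P x y := fun c x y => by
    simp only [P, h, star_smul, smul_mul_assoc, mul_smul_comm, map_smul, map_add, smul_eq_mul,
      map_mul, Complex.star_def]
    ring
  have hfx : ∀ x : H →L[ℂ] H, f (star x * x, x * star x) ≤ 16 * C * ‖x‖ ^ 2 := fun x => by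
    have := hf1 (star x * x) (x * star x)
    rw [CStarRing.norm_star_mul_self, CStarRing.norm_self_mul_star] at this
    linarith
  obtain ⟨I₁, f₁, h₁⟩ := factor_compact P (fun x y _ _ => hPsymm x y) hPadd hPsmul
    (fun x hx => by rw [hPre]; exact (le_max_right _ _).trans (hf2 x hx))
    (C := 16 * C) (by positivity) (fun x _ => by rw [hPre]; exact hfx x)
  obtain ⟨I₂, f₂, h₂⟩ := factor_compact (fun x y => P x y - D y (star x))
    (fun x y hx hy => by
      rw [map_sub, hPsymm, hh x (star y) hx (compact_star hy), star_star, Complex.conj_conj])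
    (fun x y z => by rw [hPadd, star_add, map_add]; ring)
    (fun c x y => by
      rw [hPsmul, star_smul, map_smul, smul_eq_mul, mul_sub]; rfl)
    (fun x hx => by
      rw [Complex.sub_re, hPre]
      have := (le_max_left _ _).trans (hf2 x hx)
      linarith)
    (C := 17 * C) (by positivity) (fun x _ => by
      rw [Complex.sub_re, hPre]
      have h1 := hfx x
      have h2 := (Complex.abs_re_le_norm _).trans (hD x (star x))
      rw [norm_star] at h2
      have h3 := (abs_le.1 h2).1
      nlinarith)
  exact ⟨I₁, I₂, f₁, f₂, P, _, h₁, h₂, fun x y => by ring⟩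
end Decomp

/-! ### The tensor product side -/

section Tensor
open InnerProductSpace

lemma OperatorTensor.clm_ext (J : OperatorTensor E G) {F : Type*} [NormedAddCommGroup F]
    [NormedSpace ℂ F] {T S : G →L[ℂ] F}
    (h : ∀ a b, T (J.tmul a b) = S (J.tmul a b)) : T = S := by
  refine ContinuousLinearMap.ext_on J.dense_span ?_
  rintro _ ⟨z, rfl⟩
  exact h z.1 z.2

lemma OperatorTensor.vec_ext (J : OperatorTensor E G) {v w : G}
    (h : ∀ a b, (⟪J.tmul a b, v⟫ : ℂ) = ⟪J.tmul a b, w⟫) : v = w := by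
  have : innerSL ℂ v = innerSL ℂ w := J.clm_ext fun a b => by
    have := congrArg (starRingEnd ℂ) (h a b)
    simpa using this
  refine ext_inner_right ℂ fun g => ?_
  exact congrArg (fun φ : G →L[ℂ] ℂ => φ g) this

lemma OperatorTensor.norm_tmul (J : OperatorTensor E G) (a b : E) :
    ‖J.tmul a b‖ = ‖a‖ * ‖b‖ := by
  have h := J.inner_tmul a b a b
  rw [inner_self_eq_norm_sq_to_K, inner_self_eq_norm_sq_to_K, inner_self_eq_norm_sq_to_K] at h
  have h2 : ‖J.tmul a b‖ ^ 2 = (‖a‖ * ‖b‖) ^ 2 := by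
    rw [mul_pow]
    exact_mod_cast h
  exact (pow_left_inj₀ (norm_nonneg _) (by positivity) two_ne_zero).1 h2

/-- The tensor map as a bounded bilinear map. -/
def OperatorTensor.tm (J : OperatorTensor E G) : E →L[ℂ] E →L[ℂ] G :=
  LinearMap.mkContinuous₂ J.tmul 1 fun a b => by rw [J.norm_tmul, one_mul]

lemma OperatorTensor.tm_apply (J : OperatorTensor E G) (a b : E) : J.tm a b = J.tmul a b := rfl

lemma OperatorTensor.tm_norm_le (J : OperatorTensor E G) (a : E) : ‖J.tm a‖ ≤ ‖a‖ :=
  opNorm_le_bound _ (norm_nonneg _) fun b => by rw [J.tm_apply, J.norm_tmul]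

lemma OperatorTensor.op_add_left (J : OperatorTensor E G) (x x' y : E →L[ℂ] E) :
    J.op (x + x') y = J.op x y + J.op x' y :=
  J.clm_ext fun a b => by simp [J.op_tmul]

lemma OperatorTensor.op_add_right (J : OperatorTensor E G) (x y y' : E →L[ℂ] E) :
    J.op x (y + y') = J.op x y + J.op x y' :=
  J.clm_ext fun a b => by simp [J.op_tmul]

lemma OperatorTensor.op_smul_left (J : OperatorTensor E G) (c : ℂ) (x y : E →L[ℂ] E) :
    J.op (c • x) y = c • J.op x y :=
  J.clm_ext fun a b => by simp [J.op_tmul]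

lemma OperatorTensor.op_smul_right (J : OperatorTensor E G) (c : ℂ) (x y : E →L[ℂ] E) :
    J.op x (c • y) = c • J.op x y :=
  J.clm_ext fun a b => by simp [J.op_tmul]

lemma OperatorTensor.op_zero_left (J : OperatorTensor E G) (y : E →L[ℂ] E) : J.op 0 y = 0 :=
  J.clm_ext fun a b => by simp [J.op_tmul]

lemma OperatorTensor.op_zero_right (J : OperatorTensor E G) (y : E →L[ℂ] E) : J.op y 0 = 0 :=
  J.clm_ext fun a b => by simp [J.op_tmul]

lemma OperatorTensor.op_rankOne (J : OperatorTensor E G) (a b c d : E) :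
    J.op (rankOne ℂ a c) (rankOne ℂ b d) = rankOne ℂ (J.tmul a b) (J.tmul c d) :=
  J.clm_ext fun u v => by
    simp [J.op_tmul, J.inner_tmul, smul_smul, mul_comm]

lemma OperatorTensor.continuous_op_left (J : OperatorTensor E G) (y : E →L[ℂ] E) :
    Continuous fun x => J.op x y := by
  let L : (E →L[ℂ] E) →ₗ[ℂ] (G →L[ℂ] G) :=
    { toFun := fun x => J.op x y
      map_add' := fun x x' => J.op_add_left x x' y
      map_smul' := fun c x => J.op_smul_left c x y }
  refine LinearMap.continuous_of_seq_closed_graph (g := L) fun s x T hs hT => ?_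
  refine J.clm_ext fun a b => ?_
  have h1 : Filter.Tendsto (fun n => (L (s n)) (J.tmul a b)) Filter.atTop
      (nhds (T (J.tmul a b))) :=
    ((ContinuousLinearMap.apply ℂ G (J.tmul a b)).continuous.tendsto T).comp hT
  have h2 : Filter.Tendsto (fun n => J.tm.flip (y b) (s n a)) Filter.atTop
      (nhds (J.tm.flip (y b) (x a))) :=
    ((J.tm.flip (y b)).continuous.tendsto _).comp
      (((ContinuousLinearMap.apply ℂ E a).continuous.tendsto x).comp hs)
  have h3 : ∀ n, (L (s n)) (J.tmul a b) = J.tm.flip (y b) (s n a) := fun n => J.op_tmul _ _ _ _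
  simp only [h3] at h1
  rw [tendsto_nhds_unique h1 h2]
  exact (J.op_tmul x y a b).symm

lemma OperatorTensor.continuous_op_right (J : OperatorTensor E G) (x : E →L[ℂ] E) :
    Continuous fun y => J.op x y := by
  let L : (E →L[ℂ] E) →ₗ[ℂ] (G →L[ℂ] G) :=
    { toFun := fun y => J.op x y
      map_add' := fun y y' => J.op_add_right x y y'
      map_smul' := fun c y => J.op_smul_right c x y }
  refine LinearMap.continuous_of_seq_closed_graph (g := L) fun s y T hs hT => ?_
  refine J.clm_ext fun a b => ?_
  have h1 : Filter.Tendsto (fun n => (L (s n)) (J.tmul a b)) Filter.atTop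
      (nhds (T (J.tmul a b))) :=
    ((ContinuousLinearMap.apply ℂ G (J.tmul a b)).continuous.tendsto T).comp hT
  have h2 : Filter.Tendsto (fun n => J.tm (x a) (s n b)) Filter.atTop
      (nhds (J.tm (x a) (y b))) :=
    ((J.tm (x a)).continuous.tendsto _).comp
      (((ContinuousLinearMap.apply ℂ E b).continuous.tendsto y).comp hs)
  have h3 : ∀ n, (L (s n)) (J.tmul a b) = J.tm (x a) (s n b) := fun n => J.op_tmul _ _ _ _
  simp only [h3] at h1
  rw [tendsto_nhds_unique h1 h2]
  exact (J.op_tmul x y a b).symm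

lemma OperatorTensor.op_compact (J : OperatorTensor E G) {x y : E →L[ℂ] E}
    (hx : IsCompactOperator x) (hy : IsCompactOperator y) : IsCompactOperator (J.op x y) := by
  refine compact_induction (P := fun x => IsCompactOperator (J.op x y)) ?_ ?_ ?_ ?_ hx
  · intro u v
    refine compact_induction (P := fun y => IsCompactOperator (J.op (rankOne ℂ u v) y))
      ?_ ?_ ?_ ?_ hy
    · intro w z
      rw [J.op_rankOne]
      exact rankOne_compact _ _
    · rw [J.op_zero_right]; exact isCompactOperator_zero
    · intro y y' h h'
      rw [J.op_add_right]; exact h.add h'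
    · exact isClosed_compact.preimage (J.continuous_op_right _)
  · rw [J.op_zero_left]; exact isCompactOperator_zero
  · intro y y' h h'
    rw [J.op_add_left]; exact h.add h'
  · exact isClosed_compact.preimage (J.continuous_op_left _)

lemma OperatorTensor.slice (J : OperatorTensor E G) (f : (E →L[ℂ] E) →L[ℂ] ℂ) :
    ∃ Sl : (G →L[ℂ] G) →L[ℂ] (E →L[ℂ] E), ∀ R u v,
      (⟪v, Sl R u⟫ : ℂ) = f (adjoint (J.tm v) ∘L R ∘L J.tm u) := by
  have hb : ∀ (R : G →L[ℂ] G) (v u : E),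
      ‖f (adjoint (J.tm v) ∘L R ∘L J.tm u)‖ ≤ (‖f‖ * ‖R‖) * ‖v‖ * ‖u‖ := fun R v u => by
    refine (f.le_opNorm _).trans ?_
    have h1 : ‖adjoint (J.tm v) ∘L R ∘L J.tm u‖ ≤ ‖v‖ * (‖R‖ * ‖u‖) := by
      refine (opNorm_comp_le _ _).trans ?_
      have h2 : ‖adjoint (J.tm v)‖ ≤ ‖v‖ := by
        rw [LinearIsometryEquiv.norm_map]; exact J.tm_norm_le v
      have h3 : ‖R ∘L J.tm u‖ ≤ ‖R‖ * ‖u‖ :=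
        (opNorm_comp_le _ _).trans (by have := J.tm_norm_le u; gcongr)
      gcongr
    calc _ ≤ ‖f‖ * (‖v‖ * (‖R‖ * ‖u‖)) := by gcongr
      _ = _ := by ring
  have hex : ∀ R : G →L[ℂ] G, ∃ R' : E →L[ℂ] E, ∀ u v,
      (⟪v, R' u⟫ : ℂ) = f (adjoint (J.tm v) ∘L R ∘L J.tm u) := fun R => by
    let B : E →L⋆[ℂ] E →L[ℂ] ℂ := LinearMap.mkContinuous₂
      (LinearMap.mk₂'ₛₗ (starRingEnd ℂ) (RingHom.id ℂ)
        (fun v u => f (adjoint (J.tm v) ∘L R ∘L J.tm u))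
        (by intros; simp)
        (by
          intro c m n
          have e : adjoint (c • J.tm m) = starRingEnd ℂ c • adjoint (J.tm m) :=
            LinearIsometryEquiv.map_smulₛₗ _ _ _
          rw [map_smul, e, smul_comp, map_smul])
        (by intros; simp) (by intros; simp)) (‖f‖ * ‖R‖) (hb R)
    refine ⟨adjoint (InnerProductSpace.continuousLinearMapOfBilin B), fun u v => ?_⟩
    rw [adjoint_inner_right, continuousLinearMapOfBilin_apply]
    rfl
  choose S hS using hex
  let L : (G →L[ℂ] G) →ₗ[ℂ] (E →L[ℂ] E) :=
    { toFun := S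
      map_add' := fun R R' => exists_density_unique fun u v => by
        rw [add_apply, inner_add_right, hS, hS, hS, add_comp, comp_add, map_add]
      map_smul' := fun c R => exists_density_unique fun u v => by
        simp only [RingHom.id_apply, smul_apply]
        rw [inner_smul_right, hS, hS, smul_comp, comp_smul, map_smul, smul_eq_mul] }
  refine ⟨L.mkContinuous ‖f‖ fun R => ?_, fun R u v => hS R u v⟩
  refine opNorm_le_bound _ (by positivity) fun u => ?_
  show ‖S R u‖ ≤ _
  have h1 := hb R (S R u) u
  rw [← hS, inner_self_eq_norm_sq_to_K] at h1
  simp only [norm_pow, RCLike.norm_ofReal, abs_norm] at h1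
  by_cases h0 : ‖S R u‖ = 0
  · rw [h0]; positivity
  · have hp : 0 < ‖S R u‖ := lt_of_le_of_ne (norm_nonneg _) (Ne.symm h0)
    refine le_of_mul_le_mul_left ?_ hp
    calc ‖S R u‖ * ‖S R u‖ = ‖S R u‖ ^ 2 := by ring
      _ ≤ _ := h1
      _ = _ := by ring

lemma OperatorTensor.product_functional (J : OperatorTensor E G) (f f' : (E →L[ℂ] E) →L[ℂ] ℂ)
    {X X' : E →L[ℂ] E} (hX : ∀ g h, f (rankOne ℂ g h) = ⟪h, X g⟫)
    (hX' : ∀ g h, f' (rankOne ℂ g h) = ⟪h, X' g⟫) :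
    ∃ Φ : (G →L[ℂ] G) →L[ℂ] ℂ, (∀ x y, Φ (J.op x y) = f x * f' y) ∧
      ∀ g h, Φ (rankOne ℂ g h) = ⟪h, J.op X X' g⟫ := by
  obtain ⟨Sl, hSl⟩ := J.slice f'
  have h1 : ∀ x y, (f ∘L Sl) (J.op x y) = f x * f' y := fun x y => by
    have : Sl (J.op x y) = f' y • x := exists_density_unique fun u v => by
      rw [hSl]
      have e : adjoint (J.tm v) ∘L J.op x y ∘L J.tm u = (⟪v, x u⟫ : ℂ) • y := by
        refine exists_density_unique fun z w => ?_
        simp only [comp_apply, smul_apply, J.tm_apply, J.op_tmul]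
        rw [adjoint_inner_right, J.tm_apply, J.inner_tmul, inner_smul_right]
      rw [e, map_smul, smul_apply, inner_smul_right, smul_eq_mul, mul_comm]
    rw [comp_apply, this, map_smul, smul_eq_mul, mul_comm]
  refine ⟨f ∘L Sl, h1, ?_⟩
  obtain ⟨T, hT⟩ := exists_density (f ∘L Sl)
  have : T = J.op X X' := J.clm_ext fun a b => J.vec_ext fun c d => by
    rw [← hT, ← J.op_rankOne, h1, hX, hX', J.op_tmul, J.inner_tmul]
  intro g h
  rw [hT, this]

lemma OperatorTensor.trace_op (J : OperatorTensor E G) {ιG : Type*} (bG : HilbertBasis ιG ℂ G)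
    (f : (E →L[ℂ] E) →L[ℂ] ℂ) {X : E →L[ℂ] E} (hX : ∀ g h, f (rankOne ℂ g h) = ⟪h, X g⟫)
    {x y : E →L[ℂ] E} (hx : IsCompactOperator x) (hy : IsCompactOperator y) :
    HasSum (fun i => (⟪bG i, (J.op x y * J.op X (adjoint X)) (bG i)⟫ : ℂ))
      (f x * starRingEnd ℂ (f (star y))) := by
  let f' : (E →L[ℂ] E) →L[ℂ] ℂ := LinearMap.mkContinuous
    { toFun := fun y => starRingEnd ℂ (f (star y))
      map_add' := by intros; simp
      map_smul' := by intros; simp } ‖f‖ (fun y => by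
        have := f.le_opNorm (star y)
        rw [norm_star] at this
        simpa using this)
  have hf' : ∀ y, f' y = starRingEnd ℂ (f (star y)) := fun y => rfl
  obtain ⟨Φ, h1, h2⟩ := J.product_functional f f' hX (X' := adjoint X) (fun g h => by
    rw [hf', star_eq_adjoint, adjoint_rankOne, hX, adjoint_inner_right, inner_conj_symm])
  rw [← hf', ← h1]
  exact trace_formula bG Φ _ h2 (J.op_compact hx hy)
end Tensor

/-! ### Assembly -/

section Final
open InnerProductSpace

lemma final_span (J : OperatorTensor E G) (D : (E →L[ℂ] E) →ₗ[ℂ] (E →L[ℂ] E) →ₗ[ℂ] ℂ)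
    (β : ↥J.compactSpan →ₗ[ℂ] ℂ) (hβ : IsBetaFor J D β)
    {ιG : Type u} (bG : HilbertBasis ιG ℂ G) {I : Type u} (T : I → G →L[ℂ] G)
    (h : ∀ x y : E →L[ℂ] E, IsCompactOperator x → IsCompactOperator y → ∃ τ : I → ℂ,
      (∀ i, HasSum (fun j => (⟪bG j, (J.op x y * T i) (bG j)⟫ : ℂ)) (τ i)) ∧ HasSum τ (D x y))
    (S : J.compactSpan) :
    HasSum (fun i => traceAlong bG ((S : G →L[ℂ] G) * T i)) (β S) := by
  suffices hs : ∀ (R : G →L[ℂ] G) (hR : R ∈ J.compactSpan), ∃ τ : I → ℂ,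
      (∀ i, HasSum (fun j => (⟪bG j, (R * T i) (bG j)⟫ : ℂ)) (τ i)) ∧ HasSum τ (β ⟨R, hR⟩) by
    obtain ⟨τ, h1, h2⟩ := hs S S.2
    exact h2.congr_fun fun i => (h1 i).tsum_eq
  intro R hR
  induction hR using Submodule.span_induction with
  | mem R hR =>
    obtain ⟨x, y, hx, hy, rfl⟩ := hR
    obtain ⟨τ, h1, h2⟩ := h x y hx hy
    refine ⟨τ, h1, ?_⟩
    have e := hβ x y hx hy (Submodule.subset_span ⟨x, y, hx, hy, rfl⟩)
    have h3 := h2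
    rw [← e] at h3
    exact h3
  | zero =>
    refine ⟨0, fun i => ?_, ?_⟩
    · simp
    · have : β ⟨0, J.compactSpan.zero_mem⟩ = 0 := map_zero β
      rw [this]
      exact hasSum_zero
  | add R R' hR hR' ih ih' =>
    obtain ⟨τ, h1, h2⟩ := ih
    obtain ⟨τ', h1', h2'⟩ := ih'
    refine ⟨fun i => τ i + τ' i, fun i => ?_, ?_⟩
    · refine ((h1 i).add (h1' i)).congr_fun fun j => ?_
      rw [add_mul, add_apply, inner_add_right]
    · have : β ⟨R + R', J.compactSpan.add_mem hR hR'⟩ = β ⟨R, hR⟩ + β ⟨R', hR'⟩ :=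
        map_add β ⟨R, hR⟩ ⟨R', hR'⟩
      rw [this]
      exact h2.add h2'
  | smul c R hR ih =>
    obtain ⟨τ, h1, h2⟩ := ih
    refine ⟨fun i => c * τ i, fun i => ?_, ?_⟩
    · refine ((h1 i).mul_left c).congr_fun fun j => ?_
      rw [smul_mul_assoc, smul_apply, inner_smul_right]
    · have : β ⟨c • R, J.compactSpan.smul_mem c hR⟩ = c * β ⟨R, hR⟩ :=
        map_smul β c ⟨R, hR⟩
      rw [this]
      exact h2.mul_left c

end Final

/-- For a bounded decoherence functional `d` on a Hilbert space
of dimension greater than two, with associated functional `β` on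
`K(𝔥) • K(𝔥)`, there are families `{𝔛ᵢ}, {𝔜ᵢ}` of trace class operators with
`∑ᵢ |tr(x 𝔛ᵢ)|²` and `∑ᵢ |tr(y 𝔜ᵢ)|²` convergent for compact `x, y`, and
`β(S) = ∑ᵢ tr(S (𝔛ᵢ ⊗ 𝔛ᵢ* − 𝔜ᵢ ⊗ 𝔜ᵢ*))` absolutely convergent for every
`S ∈ K(𝔥) • K(𝔥)`. -/
theorem stmt_11 (hdim : 2 < Module.rank ℂ E)
    (d : (E →L[ℂ] E) → (E →L[ℂ] E) → ℂ)
    (hd : IsDecoherenceFunctional d) (hbd : DFBounded d)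
    (J : OperatorTensor E G)
    (D : (E →L[ℂ] E) →ₗ[ℂ] (E →L[ℂ] E) →ₗ[ℂ] ℂ)
    (hD : IsBoundedBilinear D) (hDd : ExtendsDF D d)
    (β : ↥J.compactSpan →ₗ[ℂ] ℂ) (hβ : IsBetaFor J D β)
    {ιE ιG : Type u} (bE : HilbertBasis ιE ℂ E) (bG : HilbertBasis ιG ℂ G) :
    ∃ (I : Type u) (X Y : I → E →L[ℂ] E),
      (∀ i, IsTraceClass (X i)) ∧ (∀ i, IsTraceClass (Y i)) ∧
      (∀ x : E →L[ℂ] E, IsCompactOperator (⇑x) →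
        Summable fun i => ‖traceAlong bE (x * X i)‖ ^ 2) ∧
      (∀ y : E →L[ℂ] E, IsCompactOperator (⇑y) →
        Summable fun i => ‖traceAlong bE (y * Y i)‖ ^ 2) ∧
      ∀ S : J.compactSpan,
        Summable (fun i => ‖traceAlong bG ((S : G →L[ℂ] G) *
          (J.op (X i) (adjoint (X i)) - J.op (Y i) (adjoint (Y i))))‖) ∧
        HasSum (fun i => traceAlong bG ((S : G →L[ℂ] G) *
          (J.op (X i) (adjoint (X i)) - J.op (Y i) (adjoint (Y i))))) (β S) := by
  classical
  obtain ⟨C₀, hC₀⟩ := hD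
  obtain ⟨C, hC, hDC⟩ : ∃ C : ℝ, 0 ≤ C ∧ ∀ x y, ‖D x y‖ ≤ C * ‖x‖ * ‖y‖ :=
    ⟨max C₀ 0, le_max_right _ _, fun x y => (hC₀ x y).trans (by gcongr; exact le_max_left _ _)⟩
  have hherm : ∀ x y : E →L[ℂ] E, IsCompactOperator x → IsCompactOperator y →
      D x y = starRingEnd ℂ (D (star y) (star x)) := fun x y hx hy =>
    herm_compact hDC (fun p q hp hp' hq hq' => by
      rw [hDd p q ⟨hp, hp'⟩ ⟨hq, hq'⟩, hDd q p ⟨hq, hq'⟩ ⟨hp, hp'⟩]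
      exact hd.hermitian p q ⟨hp, hp'⟩ ⟨hq, hq'⟩) hx hy
  obtain ⟨I₁, I₂, f₁, f₂, P, Q, hP, hQ, hPQ⟩ := decomp_compact hC hDC hherm
  choose X₁ hX₁ using fun i => exists_density (f₁ i)
  choose Y₂ hY₂ using fun i => exists_density (f₂ i)
  have hnorm : ∀ z : ℂ, ‖z‖ ^ 2 = ‖starRingEnd ℂ z * z‖ := fun z => by
    rw [norm_mul, RCLike.norm_conj, sq]
  have hX₁t : ∀ i (x : E →L[ℂ] E), IsCompactOperator x → traceAlong bE (x * X₁ i) = f₁ i x :=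
    fun i x hx => (trace_formula bE (f₁ i) (X₁ i) (hX₁ i) hx).tsum_eq
  have hY₂t : ∀ i (x : E →L[ℂ] E), IsCompactOperator x → traceAlong bE (x * Y₂ i) = f₂ i x :=
    fun i x hx => (trace_formula bE (f₂ i) (Y₂ i) (hY₂ i) hx).tsum_eq
  have htc0 : IsTraceClass (0 : E →L[ℂ] E) := ⟨0, fun n e f _ _ => by simp⟩
  have key : ∀ S : J.compactSpan, HasSum (fun i => traceAlong bG ((S : G →L[ℂ] G) *
      (J.op ((Sum.elim X₁ 0 : I₁ ⊕ I₂ → E →L[ℂ] E) i)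
          (adjoint ((Sum.elim X₁ 0 : I₁ ⊕ I₂ → E →L[ℂ] E) i)) -
        J.op ((Sum.elim 0 Y₂ : I₁ ⊕ I₂ → E →L[ℂ] E) i)
          (adjoint ((Sum.elim 0 Y₂ : I₁ ⊕ I₂ → E →L[ℂ] E) i))))) (β S) := by
    refine final_span J D β hβ bG (fun i : I₁ ⊕ I₂ =>
      J.op ((Sum.elim X₁ 0 : I₁ ⊕ I₂ → E →L[ℂ] E) i)
          (adjoint ((Sum.elim X₁ 0 : I₁ ⊕ I₂ → E →L[ℂ] E) i)) -
        J.op ((Sum.elim 0 Y₂ : I₁ ⊕ I₂ → E →L[ℂ] E) i)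
          (adjoint ((Sum.elim 0 Y₂ : I₁ ⊕ I₂ → E →L[ℂ] E) i))) ?_
    intro x y hx hy
    refine ⟨Sum.elim (fun i => f₁ i x * starRingEnd ℂ (f₁ i (star y)))
      (fun i => -(f₂ i x * starRingEnd ℂ (f₂ i (star y)))), ?_, ?_⟩
    · rintro (i | i)
      · simp only [Sum.elim_inl, Pi.zero_apply, J.op_zero_left, sub_zero]
        exact J.trace_op bG (f₁ i) (hX₁ i) hx hy
      · simp only [Sum.elim_inr, Pi.zero_apply, J.op_zero_left, zero_sub, mul_neg, neg_apply,
          inner_neg_right]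
        exact (J.trace_op bG (f₂ i) (hY₂ i) hx hy).neg
    · have e : D x y = P (star y) x + -Q (star y) x := by
        rw [← sub_eq_add_neg, ← hPQ, star_star]
      rw [e]
      refine HasSum.sum ?_ ?_
      · refine (hP (star y) x (compact_star hy) hx).congr_fun fun i => ?_
        simp [mul_comm]
      · refine (hQ (star y) x (compact_star hy) hx).neg.congr_fun fun i => ?_
        simp [mul_comm]
  refine ⟨I₁ ⊕ I₂, Sum.elim X₁ 0, Sum.elim 0 Y₂, ?_, ?_, ?_, ?_, fun S => ⟨(key S).summable.norm, key S⟩⟩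
  · rintro (i | i)
    · exact ⟨_, density_sum_bound (f₁ i) (X₁ i) (hX₁ i)⟩
    · exact htc0
  · rintro (i | i)
    · exact htc0
    · exact ⟨_, density_sum_bound (f₂ i) (Y₂ i) (hY₂ i)⟩
  · intro x hx
    refine Summable.sum _ ?_ ?_
    · refine (hP x x hx hx).summable.norm.congr fun i => ?_
      simp only [Function.comp, Sum.elim_inl, hX₁t i x hx, hnorm]
    · simp [Function.comp_def, traceAlong]
  · intro x hx
    refine Summable.sum _ ?_ ?_
    · simp [Function.comp_def, traceAlong]
    · refine (hQ x x hx hx).summable.norm.congr fun i => ?_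
      simp only [Function.comp, Sum.elim_inr, hY₂t i x hx, hnorm]
end
end

section
/- Let 𝔥 be a separable complex Hilbert space of dimension greater than two and let d be a tracially bounded decoherence functional for 𝔥. Then there exists a unique bounded linear operator 𝔐 on 𝔥 ⊗ 𝔥 such that d(p,q) = tr(𝔐(p ⊗ q)) whenever p and q are finite rank projections on 𝔥. -/
/- Common background definitions: decoherence functionals on the projection
lattice of a complex Hilbert space, boundedness/additivity notions, trace class
operators, and an axiomatisation of the Hilbert space tensor product
`𝔥 ⊗ 𝔥` together with the operator tensor product. -/

noncomputable section

open scoped ComplexInnerProductSpace ComplexOrder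
open ContinuousLinearMap

universe u

variable {E : Type u} [NormedAddCommGroup E] [InnerProductSpace ℂ E] [CompleteSpace E]
variable {G : Type u} [NormedAddCommGroup G] [InnerProductSpace ℂ G] [CompleteSpace G]

section Helpers12

open InnerProductSpace

theorem aux_polar {V : Type*} [AddCommGroup V] [Module ℂ V]
    (f : V →ₗ⋆[ℂ] V →ₗ[ℂ] ℂ) (x y : V) :
    4 * f x y = f (x + y) (x + y) - f (x - y) (x - y)
      - Complex.I * f (x + Complex.I • y) (x + Complex.I • y)
      + Complex.I * f (x - Complex.I • y) (x - Complex.I • y) := by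
  simp only [map_add, map_sub, LinearMap.add_apply, LinearMap.sub_apply, map_smulₛₗ,
    LinearMap.smul_apply, smul_eq_mul, Complex.conj_I, RingHom.id_apply]
  linear_combination (2 * f x y - 2 * f y x) * Complex.I_sq

theorem aux_diag_zero {V : Type*} [AddCommGroup V] [Module ℂ V]
    (f : V →ₗ⋆[ℂ] V →ₗ[ℂ] ℂ) (h : ∀ x, f x x = 0) (x y : V) : f x y = 0 := by
  have := aux_polar f x y
  rw [h, h, h, h] at this
  simpa using this

theorem aux_bound (f : G →ₗ⋆[ℂ] G →ₗ[ℂ] ℂ) (S : Submodule ℂ G) (C : ℝ)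
    (h : ∀ x ∈ S, ‖f x x‖ ≤ C * ‖x‖ ^ 2) (x y : G) (hx : x ∈ S) (hy : y ∈ S) :
    ‖f x y‖ ≤ 2 * C * ‖x‖ * ‖y‖ := by
  have key : ∀ x ∈ S, ∀ y ∈ S, ‖f x y‖ ≤ C * (‖x‖ ^ 2 + ‖y‖ ^ 2) := by
    intro x hx y hy
    have hp := aux_polar f x y
    have hIy : Complex.I • y ∈ S := S.smul_mem _ hy
    have h1 := h _ (S.add_mem hx hy)
    have h2 := h _ (S.sub_mem hx hy)
    have h3 := h _ (S.add_mem hx hIy)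
    have h4 := h _ (S.sub_mem hx hIy)
    have p1 := parallelogram_law_with_norm ℂ x y
    have p2 := parallelogram_law_with_norm ℂ x (Complex.I • y)
    have hn : ‖Complex.I • y‖ = ‖y‖ := by simp [norm_smul]
    rw [hn] at p2
    have h5 : ‖4 * f x y‖ ≤ ‖f (x + y) (x + y)‖ + ‖f (x - y) (x - y)‖
      + ‖f (x + Complex.I • y) (x + Complex.I • y)‖
      + ‖f (x - Complex.I • y) (x - Complex.I • y)‖ := by
      rw [hp]
      refine (norm_add_le _ _).trans ?_
      refine add_le_add ((norm_sub_le _ _).trans (add_le_add (norm_sub_le _ _) ?_)) ?_ <;> simp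
    have h6 : ‖4 * f x y‖ = 4 * ‖f x y‖ := by simp
    rw [h6] at h5
    have p1' := congrArg (fun t => C * t) p1
    have p2' := congrArg (fun t => C * t) p2
    linarith
  rcases eq_or_ne x 0 with rfl | hx0
  · simp
  rcases eq_or_ne y 0 with rfl | hy0
  · simp
  have nx : (0 : ℝ) < ‖x‖ := norm_pos_iff.2 hx0
  have ny : (0 : ℝ) < ‖y‖ := norm_pos_iff.2 hy0
  have k := key (((‖x‖⁻¹ : ℝ) : ℂ) • x) (S.smul_mem _ hx) (((‖y‖⁻¹ : ℝ) : ℂ) • y) (S.smul_mem _ hy)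
  have e1 : ‖((‖x‖⁻¹ : ℝ) : ℂ) • x‖ = 1 := by
    rw [norm_smul]; simp [nx.ne']
  have e2 : ‖((‖y‖⁻¹ : ℝ) : ℂ) • y‖ = 1 := by
    rw [norm_smul]; simp [ny.ne']
  rw [e1, e2] at k
  simp only [map_smulₛₗ, LinearMap.smul_apply, smul_eq_mul, norm_mul, RingHom.id_apply,
    Complex.conj_ofReal, Complex.norm_real, norm_inv, norm_norm] at k
  have k2 : ‖f x y‖ = (‖x‖⁻¹ * (‖y‖⁻¹ * ‖f x y‖)) * (‖x‖ * ‖y‖) := by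
    field_simp
  have k3 : ‖x‖⁻¹ * (‖y‖⁻¹ * ‖f x y‖) ≤ 2 * C := by linarith
  calc ‖f x y‖ = _ := k2
    _ ≤ (2 * C) * (‖x‖ * ‖y‖) := by gcongr
    _ = _ := by ring

theorem aux_operator (f : G →ₗ⋆[ℂ] G →ₗ[ℂ] ℂ) (S : Submodule ℂ G) (hS : Dense (S : Set G))
    (K : ℝ) (hK : 0 ≤ K) (h : ∀ x ∈ S, ∀ y ∈ S, ‖f x y‖ ≤ K * ‖x‖ * ‖y‖) :
    ∃ M : G →L[ℂ] G, ∀ x ∈ S, ∀ y ∈ S, ⟪x, M y⟫ = f x y := by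
  have ex : ∀ x : S, ∃ t : G, (∀ y ∈ S, ⟪t, y⟫ = f x y) ∧ ‖t‖ ≤ K * ‖x‖ := by
    intro x
    let g : S →L[ℂ] ℂ := LinearMap.mkContinuous ((f x).comp S.subtype) (K * ‖x‖)
      (fun y => h x x.2 y y.2)
    obtain ⟨g', hg', hn⟩ := exists_extension_norm_eq S g
    refine ⟨(toDual ℂ G).symm g', ?_, ?_⟩
    · intro y hy
      rw [toDual_symm_apply]
      exact hg' ⟨y, hy⟩
    · rw [LinearIsometryEquiv.norm_map, hn]
      exact LinearMap.mkContinuous_norm_le _ (by positivity) _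
  choose t ht htn using ex
  let T₀ : S →ₗ[ℂ] G :=
    { toFun := t
      map_add' := by
        intro x y
        refine hS.eq_of_inner_left (𝕜 := ℂ) fun v hv => ?_
        rw [inner_add_left, ht _ v hv, ht _ v hv, ht _ v hv]
        simp
      map_smul' := by
        intro c x
        refine hS.eq_of_inner_left (𝕜 := ℂ) fun v hv => ?_
        rw [RingHom.id_apply, inner_smul_left, ht _ v hv, ht _ v hv]
        simp }
  let T₁ : S →L[ℂ] G := T₀.mkContinuous K htn
  let T : G →L[ℂ] G := T₁.extend S.subtypeL
  have hT : ∀ x : S, T x = t x := fun x =>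
    ContinuousLinearMap.extend_eq T₁ (e := S.subtypeL) hS.denseRange_val
      isUniformEmbedding_subtype_val.isUniformInducing x
  refine ⟨T.adjoint, fun x hx y hy => ?_⟩
  rw [ContinuousLinearMap.adjoint_inner_right]
  have := hT ⟨x, hx⟩
  rw [show T x = t ⟨x, hx⟩ from this]
  exact ht ⟨x, hx⟩ y hy

theorem aux_ext (J : HilbertTensorProduct E G) (A B : G →L[ℂ] G)
    (h : ∀ a b, A (J.tmul a b) = B (J.tmul a b)) : A = B := by
  refine ContinuousLinearMap.ext_on J.dense_span ?_
  rintro _ ⟨z, rfl⟩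
  exact h z.1 z.2

theorem aux_op_rankOne (J : OperatorTensor E G) (a b c e : E) :
    J.op (rankOne ℂ a c) (rankOne ℂ b e) = rankOne ℂ (J.tmul a b) (J.tmul c e) := by
  refine aux_ext J.toHilbertTensorProduct _ _ fun x y => ?_
  rw [J.op_tmul]
  simp only [rankOne_apply, map_smul, LinearMap.smul_apply, J.inner_tmul, smul_smul]
  rw [mul_comm]

theorem aux_op_sum (J : OperatorTensor E G) {m n : ℕ} (x : Fin m → E →L[ℂ] E)
    (y : Fin n → E →L[ℂ] E) :
    J.op (∑ i, x i) (∑ j, y j) = ∑ i, ∑ j, J.op (x i) (y j) := by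
  refine aux_ext J.toHilbertTensorProduct _ _ fun a b => ?_
  rw [J.op_tmul]
  simp only [_root_.sum_apply, map_sum, LinearMap.sum_apply, J.op_tmul]
  rw [Finset.sum_comm]

theorem aux_compact_rankOne (a b : E) : IsCompactOperator (⇑(rankOne ℂ a b)) := by
  have h : IsCompactOperator (⇑(innerSL ℂ b)) :=
    isCompactOperator_of_locallyCompactSpace_dom (innerSL ℂ b)
  have := h.clm_comp (ContinuousLinearMap.toSpanSingleton ℂ a)
  rw [rankOne_def']
  exact this

theorem aux_mem (J : OperatorTensor E G) (x y : G) (hx : x ∈ J.toHilbertTensorProduct.algSpan)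
    (hy : y ∈ J.toHilbertTensorProduct.algSpan) : rankOne ℂ x y ∈ J.compactSpan := by
  unfold HilbertTensorProduct.algSpan at hx hy
  induction hx using Submodule.span_induction with
  | zero => simp
  | add u v _ _ hu hv => rw [map_add, _root_.add_apply]; exact add_mem hu hv
  | smul c u _ hu =>
    rw [map_smul, _root_.smul_apply]; exact Submodule.smul_mem _ _ hu
  | mem u hu =>
    obtain ⟨⟨a, b⟩, rfl⟩ := hu
    induction hy using Submodule.span_induction with
    | zero => simp
    | add u v _ _ hu hv => rw [map_add]; exact add_mem hu hv
    | smul c u _ hu => rw [map_smulₛₗ]; exact Submodule.smul_mem _ _ hu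
    | mem u hu =>
      obtain ⟨⟨c, e⟩, rfl⟩ := hu
      exact Submodule.subset_span ⟨rankOne ℂ a c, rankOne ℂ b e, aux_compact_rankOne _ _,
        aux_compact_rankOne _ _, (aux_op_rankOne J a b c e).symm⟩

theorem aux_trace {ι : Type*} {κ : Type*} (b : HilbertBasis ι ℂ G) (M : G →L[ℂ] G)
    (s : Finset κ) (ξ : κ → G) :
    traceAlong b (M * ∑ k ∈ s, rankOne ℂ (ξ k) (ξ k)) = ∑ k ∈ s, ⟪ξ k, M (ξ k)⟫ := by
  unfold traceAlong
  refine HasSum.tsum_eq ?_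
  have := hasSum_sum (s := s) fun k _ => b.hasSum_inner_mul_inner (ξ k) (M (ξ k))
  refine this.congr_fun fun i => ?_
  rw [ContinuousLinearMap.mul_apply]
  simp only [_root_.sum_apply, map_sum, inner_sum, rankOne_apply, map_smul, inner_smul_right]

theorem aux_proj (p : E →L[ℂ] E) (hp : IsOrthoProj p) (hf : HasFiniteRank p) :
    ∃ (n : ℕ) (e : Fin n → E), (∀ i, ‖e i‖ = 1) ∧ p = ∑ i, rankOne ℂ (e i) (e i) := by
  have hsp : IsStarProjection p := ⟨hp.1, hp.2⟩
  obtain ⟨_, h⟩ := isStarProjection_iff_eq_starProjection_range.1 hsp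
  have : FiniteDimensional ℂ ↥(p.range) := hf
  refine ⟨_, fun i => (stdOrthonormalBasis ℂ p.range i : E), fun i => ?_, ?_⟩
  · exact (stdOrthonormalBasis ℂ p.range).orthonormal.1 i
  · conv_lhs => rw [h]
    exact OrthonormalBasis.starProjection_eq_sum_rankOne _

theorem aux_isOrthoProj (a : E) (ha : ‖a‖ = 1) : IsOrthoProj (rankOne ℂ a a) := by
  refine ⟨isIdempotentElem_rankOne_self ha, ?_⟩
  rw [ContinuousLinearMap.isSelfAdjoint_iff_isSymmetric]
  intro x y
  simp [inner_smul_left, inner_smul_right, mul_comm]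

theorem aux_finRank (a : E) : HasFiniteRank (rankOne ℂ a a) := by
  unfold HasFiniteRank
  refine Submodule.finiteDimensional_of_le (S₂ := Submodule.span ℂ {a}) ?_
  rintro _ ⟨x, rfl⟩
  exact Submodule.smul_mem _ _ (Submodule.mem_span_singleton_self a)

theorem aux_unique (J : HilbertTensorProduct E G) (M N : G →L[ℂ] G)
    (h : ∀ a b : E, ‖a‖ = 1 → ‖b‖ = 1 →
      ⟪J.tmul a b, M (J.tmul a b)⟫ = ⟪J.tmul a b, N (J.tmul a b)⟫) : M = N := by
  have h0 : ∀ a b : E, ⟪J.tmul a b, (M - N) (J.tmul a b)⟫ = 0 := by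
    intro a b
    rcases eq_or_ne a 0 with rfl | ha
    · simp
    rcases eq_or_ne b 0 with rfl | hb
    · simp
    have hna : (‖a‖ : ℂ) ≠ 0 := by simpa using ha
    have hnb : (‖b‖ : ℂ) ≠ 0 := by simpa using hb
    have := h ((‖a‖ : ℂ)⁻¹ • a) ((‖b‖ : ℂ)⁻¹ • b) (by rw [norm_smul]; simp [ha])
      (by rw [norm_smul]; simp [hb])
    simp only [map_smul, LinearMap.smul_apply, inner_smul_left, inner_smul_right] at this
    have e : ⟪J.tmul a b, M (J.tmul a b)⟫ = ⟪J.tmul a b, N (J.tmul a b)⟫ := by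
      simpa [hna, hnb, ha, hb] using this
    simp [inner_sub_right, e]
  set W := M - N with hW
  have h1 : ∀ a c b : E, ⟪J.tmul a b, W (J.tmul c b)⟫ = 0 := by
    intro a c b
    let f : E →ₗ⋆[ℂ] E →ₗ[ℂ] ℂ := LinearMap.mk₂'ₛₗ (starRingEnd ℂ) (RingHom.id ℂ)
      (fun x y => ⟪J.tmul x b, W (J.tmul y b)⟫)
      (by intros; simp [inner_add_left]) (by intros; simp [inner_smul_left, mul_comm])
      (by intros; simp [inner_add_right]) (by intros; simp [inner_smul_right])
    exact aux_diag_zero f (fun x => h0 x b) a c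
  have h2 : ∀ a c b e : E, ⟪J.tmul a b, W (J.tmul c e)⟫ = 0 := by
    intro a c b e
    let f : E →ₗ⋆[ℂ] E →ₗ[ℂ] ℂ := LinearMap.mk₂'ₛₗ (starRingEnd ℂ) (RingHom.id ℂ)
      (fun x y => ⟪J.tmul a x, W (J.tmul c y)⟫)
      (by intros; simp [inner_add_left]) (by intros; simp [inner_smul_left, mul_comm])
      (by intros; simp [inner_add_right]) (by intros; simp [inner_smul_right])
    exact aux_diag_zero f (fun x => h1 a c x) b e
  refine sub_eq_zero.1 (?_ : W = 0)
  refine aux_ext J _ _ fun c e => ?_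
  refine J.dense_span.eq_of_inner_right (𝕜 := ℂ) fun v hv => ?_
  rw [_root_.zero_apply, inner_zero_right]
  induction hv using Submodule.span_induction with
  | zero => simp
  | add u v _ _ hu hv => rw [inner_add_left, hu, hv, add_zero]
  | smul k u _ hu => rw [inner_smul_left, hu, mul_zero]
  | mem u hu =>
    obtain ⟨⟨a, b⟩, rfl⟩ := hu
    exact h2 a c b e

end Helpers12

/-- For a tracially bounded decoherence functional `d` on a
separable Hilbert space of dimension greater than two there is a unique bounded
operator `𝔐` on `𝔥 ⊗ 𝔥` with `d(p,q) = tr(𝔐 (p ⊗ q))` for all finite rank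
projections `p, q`. -/
theorem stmt_12 [TopologicalSpace.SeparableSpace E] (hdim : 2 < Module.rank ℂ E)
    (d : (E →L[ℂ] E) → (E →L[ℂ] E) → ℂ) (hd : IsDecoherenceFunctional d)
    (J : OperatorTensor E G) (htb : IsTraciallyBounded J d)
    {ι : Type u} (bG : HilbertBasis ι ℂ G) :
    ∃! M : G →L[ℂ] G,
      ∀ p q : E →L[ℂ] E, IsOrthoProj p → IsOrthoProj q →
        HasFiniteRank p → HasFiniteRank q →
        d p q = traceAlong bG (M * J.op p q) := by
  obtain ⟨-, D, -, hext, β, hβ, C, hC⟩ := htb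
  obtain ⟨β', hβ'⟩ := LinearMap.exists_extend β
  have hb : ∀ (T : G →L[ℂ] G) (hm : T ∈ J.compactSpan), β' T = β ⟨T, hm⟩ := by
    intro T hm
    rw [← hβ']; rfl
  let f : G →ₗ⋆[ℂ] G →ₗ[ℂ] ℂ := LinearMap.mk₂'ₛₗ (starRingEnd ℂ) (RingHom.id ℂ)
    (fun x y => β' (InnerProductSpace.rankOne ℂ y x))
    (by intros; simp) (by intros; simp) (by intros; simp) (by intros; simp)
  have hf : ∀ x y, f x y = β' (InnerProductSpace.rankOne ℂ y x) := fun _ _ => rfl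
  set S := J.toHilbertTensorProduct.algSpan with hS
  have hdiag : ∀ x ∈ S, ‖f x x‖ ≤ max C 0 * ‖x‖ ^ 2 := by
    intro x hx
    rcases eq_or_ne x 0 with rfl | hx0
    · simp
    have nx : (0 : ℝ) < ‖x‖ := norm_pos_iff.2 hx0
    have hu : ((‖x‖⁻¹ : ℝ) : ℂ) • x ∈ S := S.smul_mem _ hx
    have e1 : ‖((‖x‖⁻¹ : ℝ) : ℂ) • x‖ = 1 := by
      rw [norm_smul]; simp [nx.ne']
    have hmm : rankOneProj (((‖x‖⁻¹ : ℝ) : ℂ) • x) ∈ J.compactSpan := aux_mem J _ _ hu hu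
    have k := hC _ hu e1 hmm
    rw [← hb _ hmm] at k
    change ‖f (((‖x‖⁻¹ : ℝ) : ℂ) • x) (((‖x‖⁻¹ : ℝ) : ℂ) • x)‖ ≤ C at k
    simp only [map_smulₛₗ, LinearMap.smul_apply, smul_eq_mul, norm_mul, RingHom.id_apply,
      Complex.conj_ofReal, Complex.norm_real, norm_inv, norm_norm] at k
    have k2 : ‖f x x‖ = (‖x‖⁻¹ * (‖x‖⁻¹ * ‖f x x‖)) * ‖x‖ ^ 2 := by
      field_simp
    rw [k2]
    gcongr
    exact k.trans (le_max_left _ _)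
  obtain ⟨M, hM⟩ := aux_operator f S J.dense_span (2 * max C 0) (by positivity)
    (fun x hx y hy => aux_bound f S _ hdiag x y hx hy)
  have hmem : ∀ a b : E, J.tmul a b ∈ S := fun a b => Submodule.subset_span ⟨(a, b), rfl⟩
  have htr : ∀ (N : G →L[ℂ] G) {m n : ℕ} (e : Fin m → E) (g : Fin n → E),
      traceAlong bG (N * J.op (∑ i, InnerProductSpace.rankOne ℂ (e i) (e i))
        (∑ j, InnerProductSpace.rankOne ℂ (g j) (g j)))
      = ∑ i, ∑ j, ⟪J.tmul (e i) (g j), N (J.tmul (e i) (g j))⟫ := by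
    intro N m n e g
    rw [aux_op_sum]
    simp only [aux_op_rankOne]
    rw [← Finset.sum_product', ← Finset.sum_product']
    exact aux_trace bG N _ (fun k : Fin m × Fin n => J.tmul (e k.1) (g k.2))
  refine ⟨M, ?_, ?_⟩
  · intro p q hp hq hpf hqf
    rw [← hext p q hp hq]
    obtain ⟨m, e, -, rfl⟩ := aux_proj p hp hpf
    obtain ⟨n, g, -, rfl⟩ := aux_proj q hq hqf
    rw [htr]
    simp only [map_sum, LinearMap.sum_apply]
    rw [Finset.sum_comm]
    refine Finset.sum_congr rfl fun i _ => Finset.sum_congr rfl fun j _ => ?_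
    have hm := aux_mem J _ _ (hmem (e i) (g j)) (hmem (e i) (g j))
    have hm' := hm
    rw [← aux_op_rankOne] at hm'
    rw [hM _ (hmem _ _) _ (hmem _ _), hf, ← aux_op_rankOne, hb _ hm',
      hβ _ _ (aux_compact_rankOne _ _) (aux_compact_rankOne _ _)]
  · intro N hN
    refine aux_unique J.toHilbertTensorProduct _ _ fun a b ha hb' => ?_
    have h1 := hN _ _ (aux_isOrthoProj a ha) (aux_isOrthoProj b hb') (aux_finRank a) (aux_finRank b)
    have h2 := htr N (fun _ : Fin 1 => a) (fun _ : Fin 1 => b)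
    simp only [Finset.univ_unique, Finset.sum_singleton] at h2
    rw [← h2, ← h1, ← hext _ _ (aux_isOrthoProj a ha) (aux_isOrthoProj b hb'),
      hM _ (hmem _ _) _ (hmem _ _), hf]
    have hm' := aux_mem J _ _ (hmem a b) (hmem a b)
    rw [← aux_op_rankOne] at hm'
    rw [← aux_op_rankOne, hb _ hm', hβ _ _ (aux_compact_rankOne _ _) (aux_compact_rankOne _ _)]
end
end
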